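/- For every p ∈ (0,1) there exists R > 0 such that for every ε > 0 and every n₀ there exists an integer N ≥ n₀ and a code C ⊆ {0,1}^N with |C| ≥ 2^{RN} such that for every deletion pattern τ ∈ D(N, ⌊pN⌋), the number of codewords x ∈ C for which there exists y ∈ C with y ≠ x and τ(x) a subsequence of y is at most ε·|C|. -/

import Mathlib

/-!
A random code whose words have runs of many different lengths works.

A word consists of `n` blocks of length `L = R ^ Λ`. A block has a level `a < Λ`, chosen with
probability proportional to `2 ^ a`, and consists of runs of length `R ^ a`, the value on each run
being an independent fair bit. Choose `m` with `2 / m ≤ 1 - p`; after `⌊p N⌋` deletions at least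
`n / m` of the blocks are long, that is, keep a fraction `1 / m` of their symbols.

Fix the deletion pattern and a word `y`, and embed what survives of a random word `x` into `y`
greedily, block by block. The surviving piece of a long block of level `a` contains many independent
bits, whereas a window of at most `2 ^ A` blocks of `y` whose levels all exceed `a` has few runs,
hence few distinct subsequences. So with probability at least `1 / 2` the piece does not fit into
such a window. If for at least half of the levels `a < A` the next `2 ^ (A - a)` blocks of `y` all
have level above `a`, each of these levels contributes about the same expected advance: its
probability is proportional to `2 ^ a`, the advance is `2 ^ (A - a)`. As `A` is large, together they
make the greedy embedding advance by more than `m` blocks per long piece on average. The other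
positions of `y` are called crowded; for a typical `y` they are rare, and each hosts at most `m`
long pieces. By an exponential potential argument, for a typical `y` the probability that the
surviving part of `x` is a subsequence of `y` is at most `exp (-n / 2 ^ A)`.

Finally, draw `M = 4 D k` typical words independently, where `k = ⌊exp (n / 2 ^ (A + 1))⌋` and
`D ≥ 1 / ε`. If more than `2 k` of them are confusable under some pattern, then `k` of them are each
confusable with a word of smaller index, or `k` of them with a word of larger index; for given
indices either event has probability at most `(M B / |S|) ^ k`, with `S` the set of typical words
and `B` the maximal number of words confusable with a fixed one. As `k` is exponential in `n`, a
union bound over the `2 ^ (n L)` patterns and the at most `2 ^ M` index sets leaves a good choice.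
-/

open scoped Classical

/-- Apply a deletion pattern `τ` (a set of coordinates) to a length-`N` word `w`,
producing the subsequence of bits at positions not in `τ`. -/
def applyDel {n : ℕ} {α : Type*} (τ : Finset (Fin n)) (w : Fin n → α) : List α :=
  ((List.finRange n).filter (fun i => i ∉ τ)).map w

/-! ### Random tuples -/

section RelatedCoordinates

open Finset Function

variable {ι S 𝒯 : Type*} [Fintype S]

lemma card_mul_card_le_mul_card_of_update [DecidableEq ι] {P Q : Finset (ι → S)}
    [DecidablePred (· ∈ Q)] (i : ι) {c : ℕ}
    (hQP : ∀ X v, update X i v ∈ Q → X ∈ P)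
    (hc : ∀ X ∈ P, #{v | update X i v ∈ Q} ≤ c) :
    #Q * Fintype.card S ≤ c * #P := by
  calc #Q * Fintype.card S = #(Q ×ˢ (univ : Finset S)) := by rw [card_product, card_univ]
    _ ≤ #(P.sigma fun X => {v | update X i v ∈ Q}) := by
        refine card_le_card_of_injOn (fun q => ⟨update q.1 i q.2, q.1 i⟩) ?_ ?_
        · rintro ⟨Y, s⟩ hY
          have hmem : update (update Y i s) i (Y i) ∈ Q := by
            simpa using (mem_product.1 hY).1
          exact mem_sigma.2 ⟨hQP _ _ hmem, by simpa using hmem⟩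
        · rintro ⟨Y, s⟩ - ⟨Y', s'⟩ - h
          simp only [Sigma.mk.injEq, heq_eq_eq] at h
          have hs : s = s' := by simpa using congrFun h.1 i
          have hY := congrArg₂ (fun X v => update X i v) h.1 h.2
          simp only [update_idem, update_eq_self] at hY
          rw [hY, hs]
    _ ≤ c * #P := by
        rw [card_sigma, mul_comm]
        exact sum_le_card_nsmul _ _ _ hc

variable [Fintype ι] [LinearOrder ι]

-- Reveal the coordinates in increasing order: given the previous ones, a marked coordinate has at
-- most `card ι * B` admissible values.
lemma card_forall_exists_lt_mul_le {r : S → S → Prop} {B : ℕ} (hB : ∀ y, #{x | r x y} ≤ B)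
    (A : Finset ι) :
    #{X : ι → S | ∀ i ∈ A, ∃ j < i, r (X i) (X j)} * Fintype.card S ^ #A
      ≤ (Fintype.card ι * B) ^ #A * Fintype.card S ^ Fintype.card ι := by
  induction A using Finset.induction_on_max with
  | empty => simp [Fintype.card_pi]
  | insert a A ha ih =>
    set P : Finset (ι → S) := {X | ∀ i ∈ A, ∃ j < i, r (X i) (X j)} with hP
    set Q : Finset (ι → S) := {X | ∀ i ∈ insert a A, ∃ j < i, r (X i) (X j)} with hQ
    have hQP : ∀ X v, update X a v ∈ Q → X ∈ P := by
      intro X v hX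
      rw [hQ, mem_filter_univ, forall_mem_insert] at hX
      rw [hP, mem_filter_univ]
      intro i hi
      obtain ⟨j, hji, hr⟩ := hX.2 i hi
      rw [update_of_ne (ha i hi).ne, update_of_ne (hji.trans (ha i hi)).ne] at hr
      exact ⟨j, hji, hr⟩
    have hc : ∀ X ∈ P, #{v | update X a v ∈ Q} ≤ Fintype.card ι * B := by
      intro X _
      calc #{v | update X a v ∈ Q} ≤ #(univ.biUnion fun j : ι => {v | r v (X j)}) := by
            refine card_le_card fun v hv => ?_
            rw [mem_filter_univ, hQ, mem_filter_univ, forall_mem_insert] at hv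
            obtain ⟨j, hja, hr⟩ := hv.1
            rw [update_self, update_of_ne hja.ne] at hr
            exact mem_biUnion.2 ⟨j, mem_univ j, by simpa using hr⟩
        _ ≤ Fintype.card ι * B := card_biUnion_le_card_mul _ _ _ fun j _ => hB (X j)
    have hstep := card_mul_card_le_mul_card_of_update a hQP hc
    rw [card_insert_of_notMem fun h => (ha a h).false]
    calc #Q * Fintype.card S ^ (#A + 1)
        = #Q * Fintype.card S * Fintype.card S ^ #A := by ring
      _ ≤ Fintype.card ι * B * #P * Fintype.card S ^ #A := by gcongr
      _ = Fintype.card ι * B * (#P * Fintype.card S ^ #A) := by ring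
      _ ≤ Fintype.card ι * B *
            ((Fintype.card ι * B) ^ #A * Fintype.card S ^ Fintype.card ι) := by gcongr
      _ = _ := by ring

lemma card_exists_card_eq_forall_exists_lt_mul_le {r : S → S → Prop} {B : ℕ}
    (hB : ∀ y, #{x | r x y} ≤ B) (k : ℕ) :
    #{X : ι → S | ∃ A : Finset ι, #A = k ∧ ∀ i ∈ A, ∃ j < i, r (X i) (X j)} *
        Fintype.card S ^ k
      ≤ 2 ^ Fintype.card ι *
        ((Fintype.card ι * B) ^ k * Fintype.card S ^ Fintype.card ι) := by
  calc #{X : ι → S | ∃ A : Finset ι, #A = k ∧ ∀ i ∈ A, ∃ j < i, r (X i) (X j)} *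
        Fintype.card S ^ k
      ≤ #((univ.powersetCard k).biUnion fun A : Finset ι =>
          {X : ι → S | ∀ i ∈ A, ∃ j < i, r (X i) (X j)}) * Fintype.card S ^ k := by
        gcongr
        intro X hX
        obtain ⟨A, hA, hX⟩ := (mem_filter_univ _).1 hX
        exact mem_biUnion.2 ⟨A, mem_powersetCard_univ.2 hA, by simpa using hX⟩
    _ ≤ ∑ A ∈ univ.powersetCard k,
          #{X : ι → S | ∀ i ∈ A, ∃ j < i, r (X i) (X j)} * Fintype.card S ^ k := by
        rw [← sum_mul]
        gcongr
        exact card_biUnion_le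
    _ ≤ #((univ : Finset ι).powersetCard k) •
          ((Fintype.card ι * B) ^ k * Fintype.card S ^ Fintype.card ι) := by
        refine sum_le_card_nsmul _ _ _ fun A hA => ?_
        rw [← mem_powersetCard_univ.1 hA]
        exact card_forall_exists_lt_mul_le hB A
    _ ≤ _ := by
        rw [card_powersetCard, card_univ, smul_eq_mul]
        gcongr
        exact Nat.choose_le_two_pow _ _

-- Among `2 * k` coordinates with witnesses, `k` have their witness on the same side.
lemma exists_card_eq_forall_exists_lt_or_gt {s : ι → ι → Prop} {k : ℕ}
    (h : 2 * k ≤ #{i | ∃ j, j ≠ i ∧ s i j}) :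
    (∃ A : Finset ι, #A = k ∧ ∀ i ∈ A, ∃ j < i, s i j) ∨
      ∃ A : Finset ι, #A = k ∧ ∀ i ∈ A, ∃ j > i, s i j := by
  have hsub : ({i | ∃ j, j ≠ i ∧ s i j} : Finset ι)
      ⊆ ({i | ∃ j < i, s i j} : Finset ι) ∪ ({i | ∃ j > i, s i j} : Finset ι) := by
    intro i hi
    obtain ⟨j, hji, hs⟩ := (mem_filter_univ _).1 hi
    rw [mem_union, mem_filter_univ, mem_filter_univ]
    exact hji.lt_or_gt.imp (fun h => ⟨j, h, hs⟩) fun h => ⟨j, h, hs⟩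
  have hcard := h.trans ((card_le_card hsub).trans (card_union_le _ _))
  have of_le : ∀ (p : ι → Prop) [DecidablePred p], k ≤ #{i | p i} →
      ∃ A : Finset ι, #A = k ∧ ∀ i ∈ A, p i := by
    intro p _ hp
    obtain ⟨A, hA, hAk⟩ := exists_subset_card_eq hp
    exact ⟨A, hAk, fun i hi => (mem_filter_univ i).1 (hA hi)⟩
  have hside : k ≤ #{i | ∃ j < i, s i j} ∨ k ≤ #{i | ∃ j > i, s i j} := by omega
  exact hside.imp (of_le _) (of_le _)

lemma exists_tuple_card_related_le [Nonempty S] [Fintype 𝒯] {r : 𝒯 → S → S → Prop} {B k : ℕ}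
    (hB : ∀ τ y, #{x | r τ x y} ≤ B)
    (hlt : Fintype.card 𝒯 * (2 * (2 ^ Fintype.card ι * (Fintype.card ι * B) ^ k))
      < Fintype.card S ^ k) :
    ∃ X : ι → S, ∀ τ, #{i | ∃ j, j ≠ i ∧ r τ (X i) (X j)} ≤ 2 * k := by
  by_contra! hcon
  let lower (τ : 𝒯) : Finset (ι → S) :=
    {X | ∃ A : Finset ι, #A = k ∧ ∀ i ∈ A, ∃ j < i, r τ (X i) (X j)}
  let upper (τ : 𝒯) : Finset (ι → S) :=
    {X | ∃ A : Finset ι, #A = k ∧ ∀ i ∈ A, ∃ j > i, r τ (X i) (X j)}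
  set b := 2 ^ Fintype.card ι * ((Fintype.card ι * B) ^ k * Fintype.card S ^ Fintype.card ι)
    with hb
  have hlower : ∀ τ, #(lower τ) * Fintype.card S ^ k ≤ b := fun τ =>
    card_exists_card_eq_forall_exists_lt_mul_le (hB τ) k
  have hupper : ∀ τ, #(upper τ) * Fintype.card S ^ k ≤ b := fun τ =>
    card_exists_card_eq_forall_exists_lt_mul_le (ι := ιᵒᵈ) (hB τ) k
  have hcover : (univ : Finset (ι → S)) ⊆ univ.biUnion fun τ => lower τ ∪ upper τ := by
    intro X _
    obtain ⟨τ, hτ⟩ := hcon X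
    refine mem_biUnion.2 ⟨τ, mem_univ τ, mem_union.2 ?_⟩
    exact (exists_card_eq_forall_exists_lt_or_gt hτ.le).imp (mem_filter_univ _).2
      (mem_filter_univ _).2
  have : 0 < Fintype.card S ^ Fintype.card ι := pow_pos Fintype.card_pos _
  refine lt_irrefl (Fintype.card S ^ k * Fintype.card S ^ Fintype.card ι) ?_
  calc Fintype.card S ^ k * Fintype.card S ^ Fintype.card ι
      = #(univ : Finset (ι → S)) * Fintype.card S ^ k := by
        rw [card_univ, Fintype.card_fun, mul_comm]
    _ ≤ (∑ τ, (#(lower τ) + #(upper τ))) * Fintype.card S ^ k := by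
        gcongr
        exact (card_le_card hcover).trans
          (card_biUnion_le.trans (sum_le_sum fun τ _ => card_union_le _ _))
    _ ≤ Fintype.card 𝒯 • (b + b) := by
        rw [sum_mul]
        refine sum_le_card_nsmul _ _ _ fun τ _ => ?_
        rw [add_mul]
        exact add_le_add (hlower τ) (hupper τ)
    _ = Fintype.card 𝒯 * (2 * (2 ^ Fintype.card ι * (Fintype.card ι * B) ^ k)) *
          Fintype.card S ^ Fintype.card ι := by rw [hb, smul_eq_mul]; ring
    _ < Fintype.card S ^ k * Fintype.card S ^ Fintype.card ι := by gcongr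

end RelatedCoordinates

/-! ### Greedy embeddings -/

section GreedyEmbedding

open Finset
open scoped List

variable {α S : Type*} (f : ℕ → α)

/-- The factor `f t, …, f (t' - 1)` of an infinite word `f`; it is empty if `t' ≤ t`. -/
def wordFactor (t t' : ℕ) : List α := (List.Ico t t').map f

lemma length_wordFactor (t t' : ℕ) : (wordFactor f t t').length = t' - t := by
  simp [wordFactor]

lemma wordFactor_append {a b c : ℕ} (hab : a ≤ b) (hbc : b ≤ c) :
    wordFactor f a b ++ wordFactor f b c = wordFactor f a c := by
  rw [wordFactor, wordFactor, ← List.map_append, List.Ico.append_consecutive hab hbc, wordFactor]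

lemma wordFactor_sublist_wordFactor {a b c d : ℕ} (hab : a ≤ b) (hcd : c ≤ d) :
    wordFactor f b c <+ wordFactor f a d := by
  rcases le_total b c with hbc | hcb
  · rw [← wordFactor_append f hab (hbc.trans hcd), ← wordFactor_append f hbc hcd]
    exact (List.sublist_append_left _ _).trans (List.sublist_append_right _ _)
  · rw [wordFactor, List.Ico.eq_nil_of_le hcb]
    exact List.nil_sublist _

/-- The end of the leftmost embedding of `v` into the infinite word `f` at or after position `t`:
the least `t' ≥ t` such that `v` is a sublist of `wordFactor f t t'`. The junk value, if there is
no such `t'`, is `t`. -/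
noncomputable def greedyEnd (t : ℕ) (v : List α) : ℕ :=
  t + sInf {k | v <+ wordFactor f t (t + k)}

variable {f} {t E : ℕ} {v w : List α}

lemma le_greedyEnd : t ≤ greedyEnd f t v := Nat.le_add_right _ _

lemma greedyEnd_le (htE : t ≤ E) (h : v <+ wordFactor f t E) : greedyEnd f t v ≤ E := by
  have hmem : E - t ∈ {k | v <+ wordFactor f t (t + k)} := by
    rwa [Set.mem_ofPred_eq, Nat.add_sub_cancel' htE]
  calc greedyEnd f t v ≤ t + (E - t) := Nat.add_le_add_left (Nat.sInf_le hmem) t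
    _ = E := Nat.add_sub_cancel' htE

lemma sublist_wordFactor_greedyEnd (htE : t ≤ E) (h : v <+ wordFactor f t E) :
    v <+ wordFactor f t (greedyEnd f t v) :=
  Nat.sInf_mem (s := {k | v <+ wordFactor f t (t + k)})
    ⟨E - t, by rwa [Set.mem_ofPred_eq, Nat.add_sub_cancel' htE]⟩

lemma sublist_wordFactor_greedyEnd_of_append (htE : t ≤ E) (h : v ++ w <+ wordFactor f t E) :
    w <+ wordFactor f (greedyEnd f t v) E := by
  obtain ⟨r₁, r₂, hr, hv, hw⟩ := List.append_sublist_iff.1 h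
  have hlen : r₁.length + r₂.length = E - t := by
    rw [← List.length_append, ← hr, length_wordFactor]
  have hsplit := wordFactor_append f (a := t) (b := t + r₁.length) (c := E) (by omega) (by omega)
  obtain ⟨h₁, h₂⟩ := List.append_inj (hsplit.trans hr) (by rw [length_wordFactor]; omega)
  have hle : greedyEnd f t v ≤ t + r₁.length := greedyEnd_le (by omega) (by rwa [h₁])
  exact hw.trans (h₂ ▸ wordFactor_sublist_wordFactor f hle le_rfl)

lemma card_append_sublist_wordFactor_le [DecidableEq α] [Fintype S] {k : ℕ} (htE : t ≤ E)
    (v : Fin (k + 1) → S → List α) :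
    #{x : Fin (k + 1) → S | (List.ofFn fun j => v j (x j)).flatten <+ wordFactor f t E}
      ≤ ∑ s with v 0 s <+ wordFactor f t E,
          #{x : Fin k → S | (List.ofFn fun j => v j.succ (x j)).flatten <+
            wordFactor f (greedyEnd f t (v 0 s)) E} := by
  rw [← card_sigma]
  refine card_le_card_of_injOn (fun x => ⟨x 0, Fin.tail x⟩) ?_ ?_
  · intro x hx
    rw [mem_coe, mem_filter_univ, List.ofFn_succ, List.flatten_cons] at hx
    exact mem_sigma.2 ⟨(mem_filter_univ _).2 ((List.sublist_append_left _ _).trans hx),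
      (mem_filter_univ _).2 (sublist_wordFactor_greedyEnd_of_append htE hx)⟩
  · intro x _ x' _ h
    simp only [Sigma.mk.injEq, heq_eq_eq] at h
    rw [← Fin.cons_self_tail x, ← Fin.cons_self_tail x', h.1, h.2]

-- Up to the factors `q j`, the weight `W` of the greedy end position is a supermartingale.
lemma card_flatten_sublist_wordFactor_le [DecidableEq α] [Fintype S] {W : ℕ → ℝ}
    (hW : ∀ t ≤ E, 1 ≤ W t) :
    ∀ {k : ℕ} {v : Fin k → S → List α} {q : Fin k → ℝ}, (∀ j, 0 ≤ q j) →
      (∀ j, ∀ t ≤ E, ∑ s with v j s <+ wordFactor f t E, W (greedyEnd f t (v j s))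
        ≤ Fintype.card S * (q j * W t)) →
      ∀ {t}, t ≤ E →
        (#{x : Fin k → S | (List.ofFn fun j => v j (x j)).flatten <+ wordFactor f t E} : ℝ)
          ≤ Fintype.card S ^ k * (∏ j, q j) * W t
  | 0, v, q, _, _, t, htE => by
    simpa using hW t htE
  | k + 1, v, q, hq, hstep, t, htE => by
    have hrec : ∀ s, v 0 s <+ wordFactor f t E →
        (#{x : Fin k → S | (List.ofFn fun j => v j.succ (x j)).flatten <+
            wordFactor f (greedyEnd f t (v 0 s)) E} : ℝ)
          ≤ Fintype.card S ^ k * (∏ j : Fin k, q j.succ) * W (greedyEnd f t (v 0 s)) := fun s hs =>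
      card_flatten_sublist_wordFactor_le hW (fun j => hq j.succ) (fun j => hstep j.succ)
        (greedyEnd_le htE hs)
    have hprod : 0 ≤ ∏ j : Fin k, q j.succ := prod_nonneg fun j _ => hq j.succ
    calc (#{x : Fin (k + 1) → S |
            (List.ofFn fun j => v j (x j)).flatten <+ wordFactor f t E} : ℝ)
        ≤ ∑ s with v 0 s <+ wordFactor f t E,
            (#{x : Fin k → S | (List.ofFn fun j => v j.succ (x j)).flatten <+
              wordFactor f (greedyEnd f t (v 0 s)) E} : ℝ) := by
          exact_mod_cast card_append_sublist_wordFactor_le htE v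
      _ ≤ ∑ s with v 0 s <+ wordFactor f t E,
            Fintype.card S ^ k * (∏ j : Fin k, q j.succ) * W (greedyEnd f t (v 0 s)) :=
          sum_le_sum fun s hs => hrec s ((mem_filter_univ s).1 hs)
      _ ≤ Fintype.card S ^ k * (∏ j : Fin k, q j.succ) * (Fintype.card S * (q 0 * W t)) := by
          rw [← mul_sum]
          gcongr
          exact hstep 0 t htE
      _ = Fintype.card S ^ (k + 1) * (∏ j, q j) * W t := by
          rw [Fin.prod_univ_succ, pow_succ]
          ring

end GreedyEmbedding

/-! ### Sublists of words with long runs -/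

section Sublists

open Finset
open scoped List

variable {α : Type*} [DecidableEq α]

lemma card_toFinset_sublists_append_le (l₁ l₂ : List α) :
    #(l₁ ++ l₂).sublists.toFinset ≤ #l₁.sublists.toFinset * #l₂.sublists.toFinset := by
  rw [← card_product]
  refine card_le_card_of_surjOn (fun v => v.1 ++ v.2) fun v hv => ?_
  rw [mem_coe, List.mem_toFinset, List.mem_sublists, List.sublist_append_iff] at hv
  obtain ⟨v₁, v₂, rfl, h₁, h₂⟩ := hv
  exact ⟨(v₁, v₂), by simp [h₁, h₂]⟩

lemma card_toFinset_sublists_replicate_le (m : ℕ) (a : α) :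
    #(List.replicate m a).sublists.toFinset ≤ m + 1 := by
  rw [← card_range (m + 1)]
  refine card_le_card_of_surjOn (fun k => List.replicate k a) fun v hv => ?_
  rw [mem_coe, List.mem_toFinset, List.mem_sublists, List.sublist_replicate_iff] at hv
  obtain ⟨k, hk, rfl⟩ := hv
  exact ⟨k, by simpa using Nat.lt_succ_of_le hk, rfl⟩

lemma card_toFinset_sublists_wordFactor_le {f : ℕ → α} {ρ u : ℕ} :
    ∀ {r : ℕ}, (∀ k ∈ Ico u (u + r), ∀ j < ρ, f (k * ρ + j) = f (k * ρ)) →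
      #(wordFactor f (u * ρ) ((u + r) * ρ)).sublists.toFinset ≤ (ρ + 1) ^ r
  | 0, _ => by simp [wordFactor]
  | r + 1, hf => by
    have hrun : wordFactor f ((u + r) * ρ) ((u + (r + 1)) * ρ)
        = List.replicate ρ (f ((u + r) * ρ)) := by
      rw [List.eq_replicate_iff, length_wordFactor]
      refine ⟨by rw [← Nat.sub_mul]; simp [← add_assoc], fun b hb => ?_⟩
      simp only [wordFactor, List.mem_map, List.Ico.mem] at hb
      obtain ⟨i, ⟨hi, hi'⟩, rfl⟩ := hb
      obtain ⟨j, rfl⟩ := Nat.exists_eq_add_of_le hi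
      exact hf (u + r) (by simp) j (by rw [← add_assoc, Nat.add_one_mul (u + r)] at hi'; omega)
    have hinit := card_toFinset_sublists_wordFactor_le (r := r) fun k hk =>
      hf k (Ico_subset_Ico_right (by omega) hk)
    rw [← wordFactor_append f (b := (u + r) * ρ) (Nat.mul_le_mul_right _ (by omega))
      (Nat.mul_le_mul_right _ (by omega)), hrun, pow_succ]
    exact (card_toFinset_sublists_append_le _ _).trans
      (Nat.mul_le_mul hinit (card_toFinset_sublists_replicate_le _ _))

end Sublists

/-! ### Deletion patterns -/

section DeletionPatterns

open Finset
open scoped List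

variable {α ι : Type*} {N n L : ℕ}

/-- `x` and `y` are confusable under the deletion pattern `τ`: what `τ` leaves of `x` may also be
received from `y` by some deletions. -/
def Confusable (τ : Finset (Fin N)) (x y : Fin N → α) : Prop :=
  applyDel τ x <+ List.ofFn y

lemma length_applyDel_add_card (τ : Finset (Fin N)) (w : Fin N → α) :
    (applyDel τ w).length + #τ = N := by
  have hlen : (applyDel τ w).length = #τᶜ := by
    rw [applyDel, List.length_map, ← List.toFinset_card_of_nodup ((List.nodup_finRange N).filter _)]
    congr 1
    ext i
    simp
  rw [hlen, add_comm, card_add_card_compl, Fintype.card_fin]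

lemma applyDel_sublist_ofFn (τ : Finset (Fin N)) (w : Fin N → α) : applyDel τ w <+ List.ofFn w := by
  rw [List.ofFn_eq_map]
  exact List.filter_sublist.map w

lemma Confusable.refl (τ : Finset (Fin N)) (x : Fin N → α) : Confusable τ x x :=
  applyDel_sublist_ofFn τ x

lemma applyDel_eq_applyDel_iff {τ : Finset (Fin N)} {w w' : Fin N → α} :
    applyDel τ w = applyDel τ w' ↔ ∀ i ∉ τ, w i = w' i := by
  simp [applyDel, List.map_inj_left]

/-- The deletion pattern that `τ` induces on the `j`-th of `n` consecutive blocks of length `L`. -/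
def blockPattern (τ : Finset (Fin (n * L))) (j : Fin n) : Finset (Fin L) :=
  {i | finProdFinEquiv (j, i) ∈ τ}

lemma sum_card_blockPattern (τ : Finset (Fin (n * L))) : ∑ j, #(blockPattern τ j) = #τ := by
  simp only [blockPattern, card_filter]
  rw [← Fintype.sum_prod_type' fun j i => if finProdFinEquiv (j, i) ∈ τ then 1 else 0,
    finProdFinEquiv.sum_comp fun i => if i ∈ τ then 1 else 0]
  simp

lemma finRange_mul (n L : ℕ) :
    List.finRange (n * L) = (List.ofFn fun j : Fin n =>
      (List.finRange L).map fun i => finProdFinEquiv (j, i)).flatten := by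
  rw [← List.ofFn_id, List.ofFn_mul]
  simp only [← List.ofFn_eq_map]
  congr! 5 with j i
  ext
  simp [finProdFinEquiv, mul_comm, add_comm]

lemma applyDel_concat (τ : Finset (Fin (n * L))) (w : Fin n → Fin L → α) :
    applyDel τ (fun i => w i.divNat i.modNat)
      = (List.ofFn fun j => applyDel (blockPattern τ j) (w j)).flatten := by
  have hdiv (j : Fin n) (i : Fin L) : (finProdFinEquiv (j, i)).divNat = j :=
    congrArg Prod.fst (finProdFinEquiv.symm_apply_apply (j, i))
  have hmod (j : Fin n) (i : Fin L) : (finProdFinEquiv (j, i)).modNat = i :=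
    congrArg Prod.snd (finProdFinEquiv.symm_apply_apply (j, i))
  simp [applyDel, finRange_mul, List.filter_flatten, List.map_flatten, List.map_ofFn,
    Function.comp_def, List.filter_map, blockPattern, hdiv, hmod]

lemma card_applyDel_comp_mem_mul_le [Fintype ι] [DecidableEq ι] [Fintype α] [DecidableEq α]
    (σ : Finset (Fin N)) (φ : Fin N → ι) (V : Finset (List α)) :
    #{u : ι → α | applyDel σ (u ∘ φ) ∈ V} * Fintype.card α ^ #(σᶜ.image φ)
      ≤ #V * Fintype.card α ^ Fintype.card ι := by
  set P := σᶜ.image φ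
  have hinj : #{u : ι → α | applyDel σ (u ∘ φ) ∈ V}
      ≤ #(V ×ˢ (univ : Finset ({i // i ∉ P} → α))) := by
    refine card_le_card_of_injOn (fun u => (applyDel σ (u ∘ φ), fun i => u i)) ?_ ?_
    · intro u hu
      simpa using hu
    · intro u _ u' _ huu
      obtain ⟨hdel, hcompl⟩ := Prod.mk.inj huu
      funext i
      by_cases hi : i ∈ P
      · obtain ⟨k, hk, rfl⟩ := mem_image.1 hi
        exact applyDel_eq_applyDel_iff.1 hdel k (mem_compl.1 hk)
      · exact congrFun hcompl ⟨i, hi⟩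
  rw [card_product, card_univ, Fintype.card_fun, Fintype.card_subtype_compl, Fintype.card_coe]
    at hinj
  calc #{u : ι → α | applyDel σ (u ∘ φ) ∈ V} * Fintype.card α ^ #P
      ≤ #V * Fintype.card α ^ (Fintype.card ι - #P) * Fintype.card α ^ #P := by gcongr
    _ = #V * Fintype.card α ^ Fintype.card ι := by
        rw [mul_assoc, ← pow_add, Nat.sub_add_cancel (card_le_univ P)]

/-- The infinite word that continues `w` by `default`. -/
def wordStream [Inhabited α] (w : Fin N → α) (i : ℕ) : α :=
  if h : i < N then w ⟨i, h⟩ else default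

lemma wordFactor_wordStream [Inhabited α] (w : Fin N → α) :
    wordFactor (wordStream w) 0 N = List.ofFn w := by
  refine List.ext_getElem (by simp [length_wordFactor]) fun i hi _ => ?_
  have hiN : i < N := by simpa [length_wordFactor] using hi
  simp [wordFactor, wordStream, List.Ico, hiN]

end DeletionPatterns

/-! ### Blocks -/

section Blocks

open Finset
open scoped List

/-- The index of a block: a level `a < Λ` with multiplicity `2 ^ a`, so that a uniform index has
level `a` with probability proportional to `2 ^ a`. -/
abbrev LevelSym (Λ : ℕ) : Type := Σ a : Fin Λ, Fin (2 ^ (a : ℕ))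

/-- A block of length `R ^ Λ`: an index and a source of bits, of which only those at the starts of
the runs of the block are used. -/
abbrev BlockSym (R Λ : ℕ) : Type := LevelSym Λ × (Fin (R ^ Λ) → Bool)

variable {R Λ n : ℕ}

/-- The level of a block. -/
def BlockSym.level (s : BlockSym R Λ) : ℕ := s.1.1

/-- The first position of the run of length `ρ` that contains position `i`. -/
def runStart {L : ℕ} (ρ : ℕ) (i : Fin L) : Fin L :=
  ⟨ρ * (i / ρ), (Nat.mul_div_le _ _).trans_lt i.2⟩

/-- The binary word of a block: at level `a` it is constant on runs of length `R ^ a`. -/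
def BlockSym.toWord (s : BlockSym R Λ) : Fin (R ^ Λ) → Bool :=
  s.2 ∘ runStart (R ^ s.level)

/-- The concatenation of the words of the blocks `x 0, …, x (n - 1)`. -/
def codeword (x : Fin n → BlockSym R Λ) : Fin (n * R ^ Λ) → Bool :=
  fun i => (x i.divNat).toWord i.modNat

lemma sum_levelSym {M : Type*} [AddCommMonoid M] (F : ℕ → M) :
    ∑ c : LevelSym Λ, F c.1 = ∑ a ∈ range Λ, 2 ^ a • F a := by
  rw [Fintype.sum_sigma, ← Fin.sum_univ_eq_sum_range fun a => 2 ^ a • F a]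
  simp

lemma card_levelSym_add_one (Λ : ℕ) : Fintype.card (LevelSym Λ) + 1 = 2 ^ Λ := by
  have hsum := sum_levelSym (Λ := Λ) fun _ => 1
  rw [sum_const, card_univ] at hsum
  simp only [smul_eq_mul, mul_one] at hsum
  rw [hsum, Nat.geomSum_eq le_rfl, Nat.div_one, Nat.sub_add_cancel Nat.one_le_two_pow]

lemma card_le_mul_card_image_runStart {L ρ : ℕ} (hρ : 0 < ρ) (T : Finset (Fin L)) :
    #T ≤ ρ * #(T.image (runStart ρ)) := by
  refine card_le_mul_card_image T ρ fun p _ => ?_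
  calc #{i ∈ T | runStart ρ i = p} ≤ #(Ico (p : ℕ) (p + ρ)) := by
        refine card_le_card_of_injOn (fun i => (i : ℕ)) ?_ fun i _ j _ => Fin.ext
        intro i hi
        obtain ⟨-, rfl⟩ := mem_filter.1 hi
        rw [mem_coe, mem_Ico]
        exact ⟨Nat.mul_div_le _ _, (Nat.lt_mul_div_succ _ hρ).trans_eq (mul_add_one _ _)⟩
    _ = ρ := by simp

lemma two_mul_card_applyDel_toWord_mem_le (hR : 0 < R) (c : LevelSym Λ) {d : ℕ}
    {σ : Finset (Fin (R ^ Λ))} (hd : R ^ (c.1 : ℕ) * d + #σ ≤ R ^ Λ) {V : Finset (List Bool)}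
    (hV : 2 * #V ≤ 2 ^ d) :
    2 * #{u | applyDel σ (BlockSym.toWord (c, u)) ∈ V} ≤ 2 ^ R ^ Λ := by
  set ρ := R ^ (c.1 : ℕ)
  have hruns : d ≤ #(σᶜ.image (runStart ρ)) := by
    refine Nat.le_of_mul_le_mul_left ?_ (pow_pos hR c.1)
    refine le_trans ?_ (card_le_mul_card_image_runStart (pow_pos hR _) σᶜ)
    rw [card_compl, Fintype.card_fin]
    exact Nat.le_sub_of_add_le hd
  have hbits := card_applyDel_comp_mem_mul_le σ (runStart ρ) V
  rw [Fintype.card_bool, Fintype.card_fin] at hbits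
  refine Nat.le_of_mul_le_mul_right ?_ (pow_pos two_pos #(σᶜ.image (runStart ρ)))
  calc 2 * #{u | applyDel σ (BlockSym.toWord (c, u)) ∈ V} * 2 ^ #(σᶜ.image (runStart ρ))
      ≤ 2 * (#V * 2 ^ R ^ Λ) := by
        rw [mul_assoc]
        exact Nat.mul_le_mul_left 2 hbits
    _ = 2 * #V * 2 ^ R ^ Λ := by ring
    _ ≤ 2 ^ #(σᶜ.image (runStart ρ)) * 2 ^ R ^ Λ := by
        gcongr
        exact hV.trans (Nat.pow_le_pow_right two_pos hruns)
    _ = 2 ^ R ^ Λ * 2 ^ #(σᶜ.image (runStart ρ)) := mul_comm _ _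

lemma wordStream_codeword_congr {x : Fin n → BlockSym R Λ} {i i' : ℕ}
    (hblock : i / R ^ Λ = i' / R ^ Λ)
    (hrun : ∀ k : Fin n, (k : ℕ) = i / R ^ Λ →
      i % R ^ Λ / R ^ (x k).level = i' % R ^ Λ / R ^ (x k).level) :
    wordStream (codeword x) i = wordStream (codeword x) i' := by
  rcases Nat.eq_zero_or_pos (R ^ Λ) with h0 | hpos
  · simp [wordStream, h0]
  have hlt : i < n * R ^ Λ ↔ i' < n * R ^ Λ := by
    rw [← Nat.div_lt_iff_lt_mul hpos, ← Nat.div_lt_iff_lt_mul hpos, hblock]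
  by_cases h : i < n * R ^ Λ
  · have hdiv : (⟨i', hlt.1 h⟩ : Fin (n * R ^ Λ)).divNat = (⟨i, h⟩ : Fin (n * R ^ Λ)).divNat :=
      Fin.ext hblock.symm
    rw [wordStream, wordStream, dif_pos h, dif_pos (hlt.1 h), codeword, codeword, hdiv]
    exact congrArg (x _).2 (Fin.ext (congrArg (_ * ·) (hrun (Fin.divNat ⟨i, h⟩) rfl)))
  · rw [wordStream, wordStream, dif_neg h, dif_neg (hlt.not.1 h)]

lemma wordStream_codeword_run (hR : 0 < R) {x : Fin n → BlockSym R Λ} {a b h : ℕ} (ha : a < Λ)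
    (hx : ∀ k : Fin n, b ≤ k → (k : ℕ) < b + h → a < (x k).level) {k j : ℕ}
    (hk : k ∈ Ico (b * R ^ (Λ - a - 1)) ((b + h) * R ^ (Λ - a - 1))) (hj : j < R ^ (a + 1)) :
    wordStream (codeword x) (k * R ^ (a + 1) + j)
      = wordStream (codeword x) (k * R ^ (a + 1)) := by
  set ρ := R ^ (a + 1) with hρ
  set Q := R ^ (Λ - a - 1) with hQ
  have hlen : R ^ Λ = ρ * Q := by rw [hρ, hQ, ← pow_add]; congr 1; omega
  have hρ0 : 0 < ρ := pow_pos hR _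
  have hrun : (k * ρ + j) / ρ = k * ρ / ρ := by
    rw [mul_comm k, Nat.mul_add_div hρ0, Nat.div_eq_of_lt hj, Nat.mul_div_cancel_left _ hρ0,
      add_zero]
  refine wordStream_codeword_congr ?_ fun i hi => ?_
  · rw [hlen, ← Nat.div_div_eq_div_mul, ← Nat.div_div_eq_div_mul, hrun]
  · have hi' : (i : ℕ) = k / Q := by
      rw [hi, hlen, ← Nat.div_div_eq_div_mul, hrun, Nat.mul_div_cancel _ hρ0]
    rw [mem_Ico, ← Nat.le_div_iff_mul_le (pow_pos hR _), ← Nat.div_lt_iff_lt_mul (pow_pos hR _),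
      ← hi'] at hk
    have hlevel : R ^ (x i).level = ρ * R ^ ((x i).level - (a + 1)) := by
      rw [hρ, ← pow_add, Nat.add_sub_cancel' (hx i hk.1 hk.2)]
    rw [hlevel, hlen, ← Nat.div_div_eq_div_mul, ← Nat.div_div_eq_div_mul,
      Nat.mod_mul_right_div_self, Nat.mod_mul_right_div_self, hrun]

lemma two_mul_card_sublists_wordStream_codeword_le (hR : 0 < R) {x : Fin n → BlockSym R Λ}
    {a b h w q : ℕ} (ha : a < Λ) (hhw : h ≤ w) (hq : 2 * (R ^ Λ + 1) ^ w ≤ 2 ^ q)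
    (hx : ∀ k : Fin n, b ≤ k → (k : ℕ) < b + h → a < (x k).level) :
    2 * #(wordFactor (wordStream (codeword x)) (b * R ^ Λ) ((b + h) * R ^ Λ)).sublists.toFinset
      ≤ 2 ^ (q * R ^ (Λ - a - 1)) := by
  set Q := R ^ (Λ - a - 1) with hQ
  have hlen : R ^ Λ = Q * R ^ (a + 1) := by rw [hQ, ← pow_add]; congr 1; omega
  have hcount := card_toFinset_sublists_wordFactor_le (f := wordStream (codeword x))
    (ρ := R ^ (a + 1)) (u := b * Q) (r := h * Q) fun k hk j hj =>
      wordStream_codeword_run hR ha hx (by rwa [← add_mul] at hk) hj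
  rw [← add_mul, mul_assoc, mul_assoc, ← hlen] at hcount
  have hrun : R ^ (a + 1) ≤ R ^ Λ := Nat.pow_le_pow_right hR ha
  calc 2 * #(wordFactor (wordStream (codeword x)) (b * R ^ Λ)
        ((b + h) * R ^ Λ)).sublists.toFinset
      ≤ 2 ^ Q * (R ^ Λ + 1) ^ (w * Q) := by
        refine Nat.mul_le_mul (Nat.le_self_pow (pow_pos hR _).ne' 2) (hcount.trans ?_)
        calc (R ^ (a + 1) + 1) ^ (h * Q) ≤ (R ^ Λ + 1) ^ (h * Q) := by gcongr
          _ ≤ (R ^ Λ + 1) ^ (w * Q) := by gcongr; omega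
    _ = (2 * (R ^ Λ + 1) ^ w) ^ Q := by rw [mul_pow, ← pow_mul]
    _ ≤ (2 ^ q) ^ Q := by gcongr
    _ = 2 ^ (q * Q) := (pow_mul _ _ _).symm

end Blocks

/-! ### Crowded blocks -/

section Crowded

open Finset

variable {n : ℕ} {A : ℕ} {ℓ : Fin n → ℕ} {m d : ℕ}

/-- In the level sequence `ℓ` of a word, a block of level at most `a` occurs among the `2 ^ (A - a)`
blocks starting with block `b`. -/
def Near (A : ℕ) (ℓ : Fin n → ℕ) (a b : ℕ) : Prop :=
  ∃ k : Fin n, b ≤ k ∧ (k : ℕ) < b + 2 ^ (A - a) ∧ ℓ k ≤ a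

/-- Block `b` is crowded if more than half of the levels `a < A` are near it. -/
def Crowded (A : ℕ) (ℓ : Fin n → ℕ) (b : ℕ) : Prop :=
  A < 2 * #{a ∈ range A | Near A ℓ a b}

/-- The set of the crowded blocks of a word of `n` blocks. -/
noncomputable def crowdedBlocks (A : ℕ) (ℓ : Fin n → ℕ) : Finset ℕ :=
  {b ∈ range n | Crowded A ℓ b}

/-- An upper bound for the number of pairs `(a, b)` with `a < A` for which a given block of level
`l` is a witness of `Near A ℓ a b`. -/
def levelCost (A l : ℕ) : ℕ := ∑ a ∈ Ico l A, 2 ^ (A - a)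

lemma card_near_le (A : ℕ) (ℓ : Fin n → ℕ) (a : ℕ) :
    #{b ∈ range n | Near A ℓ a b} ≤ ∑ k with ℓ k ≤ a, 2 ^ (A - a) := by
  calc #{b ∈ range n | Near A ℓ a b}
      ≤ #(({k | ℓ k ≤ a} : Finset (Fin n)).biUnion fun k =>
          Ico ((k : ℕ) + 1 - 2 ^ (A - a)) (k + 1)) := by
        refine card_le_card fun b hb => ?_
        obtain ⟨-, k, hbk, hkb, hk⟩ := mem_filter.1 hb
        exact mem_biUnion.2 ⟨k, (mem_filter_univ k).2 hk, mem_Ico.2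
          ⟨Nat.sub_le_iff_le_add.2 hkb, Nat.lt_succ_of_le hbk⟩⟩
    _ ≤ ∑ k with ℓ k ≤ a, 2 ^ (A - a) :=
        card_biUnion_le.trans (sum_le_sum fun k _ => by
          rw [Nat.card_Ico]
          exact tsub_tsub_le)

-- Both sides bound the number of pairs `(a, b)` with `Near A ℓ a b`.
lemma mul_card_crowdedBlocks_le (A : ℕ) (ℓ : Fin n → ℕ) :
    A * #(crowdedBlocks A ℓ) ≤ 2 * ∑ k, levelCost A (ℓ k) := by
  calc A * #(crowdedBlocks A ℓ) = ∑ _ ∈ crowdedBlocks A ℓ, A := by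
        rw [sum_const, smul_eq_mul, mul_comm]
    _ ≤ ∑ b ∈ crowdedBlocks A ℓ, 2 * #{a ∈ range A | Near A ℓ a b} :=
        sum_le_sum fun b hb => (mem_filter.1 hb).2.le
    _ ≤ ∑ b ∈ range n, 2 * #{a ∈ range A | Near A ℓ a b} :=
        sum_le_sum_of_subset (filter_subset _ _)
    _ = 2 * ∑ a ∈ range A, #{b ∈ range n | Near A ℓ a b} := by
        simp only [← mul_sum, card_filter]
        rw [sum_comm]
    _ ≤ 2 * ∑ a ∈ range A, ∑ k with ℓ k ≤ a, 2 ^ (A - a) := by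
        gcongr
        exact card_near_le _ _ _
    _ = 2 * ∑ k, levelCost A (ℓ k) := by
        simp only [levelCost]
        congr 1
        refine sum_comm' fun a k => ?_
        simp [and_comm]

/-- The number of cells of length `d` that start at or after the cell of position `t` and lie in a
crowded block, where each block consists of `m` cells. -/
noncomputable def crowdedCells (A : ℕ) (ℓ : Fin n → ℕ) (m d t : ℕ) : ℕ :=
  #{i ∈ Ico (t / d) (n * m) | Crowded A ℓ (i / m)}

lemma crowdedCells_anti {t t' : ℕ} (h : t ≤ t') :
    crowdedCells A ℓ m d t' ≤ crowdedCells A ℓ m d t :=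
  card_le_card (filter_subset_filter _ (Ico_subset_Ico_left (Nat.div_le_div_right h)))

lemma crowdedCells_lt (hd : 0 < d) {t t' : ℕ} (h : t + d ≤ t') (ht' : t' ≤ n * m * d)
    (hc : Crowded A ℓ (t / d / m)) : crowdedCells A ℓ m d t' < crowdedCells A ℓ m d t := by
  have hcell : t / d + 1 ≤ t' / d := by
    rw [← Nat.add_div_right _ hd]
    exact Nat.div_le_div_right h
  have hlt : t / d < n * m := (Nat.div_lt_iff_lt_mul hd).2 (by omega)
  refine card_lt_card ((ssubset_iff_of_subset ?_).2 ⟨t / d, by simp [hlt, hc], ?_⟩)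
  · exact filter_subset_filter _ (Ico_subset_Ico_left (by omega))
  · rw [mem_filter, mem_Ico]
    omega

lemma crowdedCells_le (hm : 0 < m) (t : ℕ) :
    crowdedCells A ℓ m d t ≤ m * #(crowdedBlocks A ℓ) := by
  have hcard : m * #(crowdedBlocks A ℓ) = #(crowdedBlocks A ℓ ×ˢ range m) := by
    rw [card_product, card_range, mul_comm]
  rw [hcard]
  refine card_le_card_of_injOn (fun i => (i / m, i % m)) ?_ ?_
  · intro i hi
    obtain ⟨hi, hc⟩ := mem_filter.1 hi
    exact mem_product.2 ⟨mem_filter.2 ⟨mem_range.2 ((Nat.div_lt_iff_lt_mul hm).2 (mem_Ico.1 hi).2),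
      hc⟩, mem_range.2 (Nat.mod_lt _ hm)⟩
  · intro i _ j _ h
    rw [← Nat.div_add_mod i m, ← Nat.div_add_mod j m, (Prod.mk.inj h).1, (Prod.mk.inj h).2]

end Crowded

/-! ### One step of the greedy embedding -/

section Step

open Finset Real
open scoped List

lemma exp_neg_le_one_sub_half {z : ℝ} (hz₀ : 0 ≤ z) (hz₁ : z ≤ 1) : exp (-z) ≤ 1 - z / 2 := by
  rw [exp_neg]
  calc (exp z)⁻¹ ≤ (z + 1)⁻¹ := inv_anti₀ (by linarith) (add_one_le_exp z)
    _ ≤ 1 - z / 2 := by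
      rw [inv_le_iff_one_le_mul₀ (by linarith)]
      nlinarith

lemma sum_le_card_mul_one_sub_half {ι : Type*} [Fintype ι] {w : ι → ℝ} {U : Finset ι} {z : ℝ}
    (hz : 0 ≤ z) (hU : 2 * #U ≤ Fintype.card ι) (hw : ∀ u, w u ≤ 1)
    (hwU : ∀ u ∉ U, w u ≤ 1 - z) :
    ∑ u, w u ≤ Fintype.card ι * (1 - z / 2) := by
  have hU' : (2 * #U : ℝ) ≤ Fintype.card ι := by exact_mod_cast hU
  have hcompl : (#Uᶜ : ℝ) = Fintype.card ι - #U := by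
    rw [card_compl, Nat.cast_sub (card_le_univ U)]
  calc ∑ u, w u = ∑ u ∈ U, w u + ∑ u ∈ Uᶜ, w u := (sum_add_sum_compl U w).symm
    _ ≤ #U • (1 : ℝ) + #Uᶜ • (1 - z) :=
        add_le_add (sum_le_card_nsmul _ _ _ fun u _ => hw u)
          (sum_le_card_nsmul _ _ _ fun u hu => hwU u (mem_compl.1 hu))
    _ ≤ Fintype.card ι * (1 - z / 2) := by
        rw [nsmul_eq_mul, nsmul_eq_mul, hcompl]
        nlinarith

/-- The weight of a greedy step from position `t` over the piece `v`: it is `0` if `v` does not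
embed before `E`, and decreases exponentially with the number of blocks of length `L` that are
crossed. -/
noncomputable def stepWeight {α : Type*} [DecidableEq α] (A L : ℕ) (f : ℕ → α) (E t : ℕ)
    (v : List α) : ℝ :=
  if v <+ wordFactor f t E then
    exp (-((greedyEnd f t v / L : ℕ) - (t / L : ℕ) : ℝ) / 2 ^ A)
  else 0

section

variable {α : Type*} [DecidableEq α] {A L : ℕ} {f : ℕ → α} {E t : ℕ} {v : List α}

lemma stepWeight_le_one : stepWeight A L f E t v ≤ 1 := by
  rw [stepWeight]
  split_ifs
  · have hdiv : ((t / L : ℕ) : ℝ) ≤ (greedyEnd f t v / L : ℕ) := by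
      exact_mod_cast Nat.div_le_div_right le_greedyEnd
    exact exp_le_one_iff.2 (div_nonpos_of_nonpos_of_nonneg (by linarith) (by positivity))
  · exact zero_le_one

lemma stepWeight_le_of_not_sublist (hL : 0 < L) (htE : t ≤ E) {h : ℕ}
    (hv : ¬ v <+ wordFactor f (t / L * L) ((t / L + h) * L)) :
    stepWeight A L f E t v ≤ exp (-(h / 2 ^ A)) := by
  rw [stepWeight]
  split_ifs with hvE
  · have hend : t / L + h ≤ greedyEnd f t v / L := by
      by_contra! hlt
      refine hv ((sublist_wordFactor_greedyEnd htE hvE).trans ?_)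
      exact wordFactor_sublist_wordFactor f (Nat.div_mul_le_self t L)
        ((Nat.div_lt_iff_lt_mul hL).1 hlt).le
    have hend' : ((t / L : ℕ) + h : ℝ) ≤ (greedyEnd f t v / L : ℕ) := by exact_mod_cast hend
    rw [← neg_div]
    gcongr
    linarith
  · exact (exp_pos _).le

end

variable {R Λ n A q : ℕ} {y : Fin n → BlockSym R Λ} {σ : Finset (Fin (R ^ Λ))} {E t : ℕ}

-- With probability at least `1 / 2`, the piece fails to embed or leaves the next `2 ^ (A - c.1)`
-- blocks.
lemma sum_stepWeight_le_of_not_near (hR : 0 < R) (hq : 2 * (R ^ Λ + 1) ^ 2 ^ A ≤ 2 ^ q)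
    (hσ : q * R ^ (Λ - 1) + #σ ≤ R ^ Λ) (htE : t ≤ E) {c : LevelSym Λ} (hcA : (c.1 : ℕ) < A)
    (hc : ¬ Near A (fun k => (y k).level) c.1 (t / R ^ Λ)) :
    ∑ u, stepWeight A (R ^ Λ) (wordStream (codeword y)) E t (applyDel σ (BlockSym.toWord (c, u)))
      ≤ 2 ^ R ^ Λ * (1 - 1 / 4 / 2 ^ (c.1 : ℕ)) := by
  have hcΛ : (c.1 : ℕ) < Λ := c.1.2
  set f := wordStream (codeword y)
  set b := t / R ^ Λ
  set V := (wordFactor f (b * R ^ Λ) ((b + 2 ^ (A - c.1)) * R ^ Λ)).sublists.toFinset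
  have hV : 2 * #V ≤ 2 ^ (q * R ^ (Λ - c.1 - 1)) := by
    refine two_mul_card_sublists_wordStream_codeword_le hR hcΛ
      (Nat.pow_le_pow_right two_pos (Nat.sub_le _ _)) hq fun k hbk hkb => ?_
    by_contra! hk
    exact hc ⟨k, hbk, hkb, hk⟩
  have hhalf := two_mul_card_applyDel_toWord_mem_le hR c (σ := σ) (by
    rwa [mul_left_comm, ← pow_add, show (c.1 : ℕ) + (Λ - c.1 - 1) = Λ - 1 by omega]) hV
  have hz : (2 : ℝ) ^ (A - c.1) / 2 ^ A = 1 / 2 ^ (c.1 : ℕ) := by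
    rw [div_eq_div_iff (by positivity) (by positivity), one_mul, ← pow_add]
    congr 1
    omega
  have hweight : ∀ u ∉ ({u | applyDel σ (BlockSym.toWord (c, u)) ∈ V} : Finset _),
      stepWeight A (R ^ Λ) f E t (applyDel σ (BlockSym.toWord (c, u)))
        ≤ 1 - 1 / 2 ^ (c.1 : ℕ) / 2 := by
    intro u hu
    rw [mem_filter_univ, List.mem_toFinset, List.mem_sublists] at hu
    refine (stepWeight_le_of_not_sublist (pow_pos hR _) htE hu).trans ?_
    rw [Nat.cast_pow, Nat.cast_two, hz]
    exact exp_neg_le_one_sub_half (by positivity)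
      (div_le_one_of_le₀ (one_le_pow₀ one_le_two) (by positivity))
  have hsum := sum_le_card_mul_one_sub_half (by positivity) (by simpa using hhalf)
    (fun _ => stepWeight_le_one) hweight
  refine hsum.trans_eq ?_
  simp only [Fintype.card_fun, Fintype.card_bool, Fintype.card_fin, Nat.cast_pow, Nat.cast_ofNat]
  ring

lemma sum_ite_not_near_ge {ℓ : Fin n → ℕ} {b : ℕ} (hA : A ≤ Λ) (hb : ¬ Crowded A ℓ b) :
    (A : ℝ) / 2 ≤ ∑ c : LevelSym Λ,
      if (c.1 : ℕ) < A ∧ ¬ Near A ℓ c.1 b then 1 / 2 ^ (c.1 : ℕ) else (0 : ℝ) := by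
  have hsplit := card_filter_add_card_filter_not (s := range A) fun a => Near A ℓ a b
  rw [card_range] at hsplit
  have hhalf : A ≤ 2 * #{a ∈ range A | ¬ Near A ℓ a b} := by
    rw [Crowded] at hb
    omega
  have hhalf' : (A : ℝ) ≤ 2 * #{a ∈ range A | ¬ Near A ℓ a b} := by exact_mod_cast hhalf
  rw [sum_levelSym fun a => if a < A ∧ ¬ Near A ℓ a b then 1 / 2 ^ a else (0 : ℝ)]
  calc (A : ℝ) / 2 ≤ #{a ∈ range A | ¬ Near A ℓ a b} := by linarith
    _ ≤ #{a ∈ range Λ | a < A ∧ ¬ Near A ℓ a b} := by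
        gcongr
        intro a ha
        obtain ⟨ha, hnear⟩ := mem_filter.1 ha
        have haA := mem_range.1 ha
        exact mem_filter.2 ⟨mem_range.2 (haA.trans_le hA), haA, hnear⟩
    _ = ∑ a ∈ range Λ, 2 ^ a • if a < A ∧ ¬ Near A ℓ a b then 1 / 2 ^ a else (0 : ℝ) := by
        rw [card_filter, Nat.cast_sum]
        refine sum_congr rfl fun a _ => ?_
        split_ifs <;> simp

-- Each of the at least `A / 2` levels that are not near contributes the same amount: its
-- multiplicity `2 ^ a` cancels the gain `2 ^ (-a)`.
lemma sum_stepWeight_le_of_not_crowded (hR : 0 < R) (hA : A ≤ Λ)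
    (hq : 2 * (R ^ Λ + 1) ^ 2 ^ A ≤ 2 ^ q) (hσ : q * R ^ (Λ - 1) + #σ ≤ R ^ Λ) (htE : t ≤ E)
    (hcr : ¬ Crowded A (fun k => (y k).level) (t / R ^ Λ)) :
    ∑ s : BlockSym R Λ, stepWeight A (R ^ Λ) (wordStream (codeword y)) E t (applyDel σ s.toWord)
      ≤ Fintype.card (BlockSym R Λ) * exp (-(A / (8 * 2 ^ Λ))) := by
  set ℓ := fun k => (y k).level
  set b := t / R ^ Λ
  set K := (Fintype.card (LevelSym Λ) : ℝ) with hK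
  have hlevel : ∀ c : LevelSym Λ,
      ∑ u, stepWeight A (R ^ Λ) (wordStream (codeword y)) E t
          (applyDel σ (BlockSym.toWord (c, u)))
        ≤ 2 ^ R ^ Λ * (1 - 1 / 4 *
          if (c.1 : ℕ) < A ∧ ¬ Near A ℓ c.1 b then 1 / 2 ^ (c.1 : ℕ) else (0 : ℝ)) := by
    intro c
    split_ifs with hc
    · refine (sum_stepWeight_le_of_not_near hR hq hσ htE hc.1 hc.2).trans_eq ?_
      ring
    · refine (sum_le_card_nsmul _ _ 1 fun _ _ => stepWeight_le_one).trans_eq ?_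
      simp
  have hsum := sum_ite_not_near_ge hA hcr
  have hK₁ : K ≤ 2 ^ Λ := by
    rw [hK]
    exact_mod_cast (Nat.le_succ _).trans_eq (card_levelSym_add_one Λ)
  calc ∑ s : BlockSym R Λ,
        stepWeight A (R ^ Λ) (wordStream (codeword y)) E t (applyDel σ s.toWord)
      ≤ ∑ c : LevelSym Λ, 2 ^ R ^ Λ * (1 - 1 / 4 *
          if (c.1 : ℕ) < A ∧ ¬ Near A ℓ c.1 b then 1 / 2 ^ (c.1 : ℕ) else (0 : ℝ)) := by
        rw [Fintype.sum_prod_type]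
        exact sum_le_sum fun c _ => hlevel c
    _ ≤ 2 ^ R ^ Λ * (K - A / 8) := by
        rw [← mul_sum, sum_sub_distrib, ← mul_sum, sum_const, card_univ, nsmul_one]
        gcongr
        linarith
    _ ≤ 2 ^ R ^ Λ * (K * (-(A / (8 * 2 ^ Λ)) + 1)) := by
        gcongr
        have hA8 : (A : ℝ) / 8 = 2 ^ Λ * (A / (8 * 2 ^ Λ)) := by field_simp
        have hpos : (0 : ℝ) ≤ A / (8 * 2 ^ Λ) := by positivity
        rw [hA8]
        nlinarith
    _ ≤ 2 ^ R ^ Λ * (K * exp (-(A / (8 * 2 ^ Λ)))) := by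
        gcongr
        exact add_one_le_exp _
    _ = Fintype.card (BlockSym R Λ) * exp (-(A / (8 * 2 ^ Λ))) := by
        rw [Fintype.card_prod, Fintype.card_fun, Fintype.card_bool, Fintype.card_fin, hK]
        push_cast
        ring

end Step

/-! ### The confusion probability -/

section ConfusionProbability

open Finset Real
open scoped List

section

variable {n A L m d : ℕ} {ℓ : Fin n → ℕ} {c : ℝ}

/-- The potential of position `t` in a word of `n` blocks of length `L`, each consisting of `m`
cells of length `d`. It rewards every block still ahead by `1 / 2 ^ A` and every crowded cell still
ahead by `c`. -/
noncomputable def potential (A : ℕ) (ℓ : Fin n → ℕ) (L m d : ℕ) (c : ℝ) (t : ℕ) : ℝ :=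
  (n - (t / L : ℕ)) / 2 ^ A + c * crowdedCells A ℓ m d t

lemma potential_nonneg (hc : 0 ≤ c) {t : ℕ} (ht : t ≤ n * L) : 0 ≤ potential A ℓ L m d c t := by
  have hdiv : ((t / L : ℕ) : ℝ) ≤ n := by
    exact_mod_cast Nat.div_le_of_le_mul (ht.trans_eq (mul_comm _ _))
  exact add_nonneg (div_nonneg (sub_nonneg.2 hdiv) (by positivity)) (by positivity)

lemma potential_le_add_of_le (hc : 0 ≤ c) {t t' : ℕ} (h : t ≤ t') :
    potential A ℓ L m d c t'
      ≤ potential A ℓ L m d c t + -((t' / L : ℕ) - (t / L : ℕ) : ℝ) / 2 ^ A := by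
  have hcells : c * crowdedCells A ℓ m d t' ≤ c * crowdedCells A ℓ m d t := by
    gcongr
    exact crowdedCells_anti h
  have hblocks : (n - (t' / L : ℕ) : ℝ) / 2 ^ A
      = (n - (t / L : ℕ)) / 2 ^ A + -((t' / L : ℕ) - (t / L : ℕ) : ℝ) / 2 ^ A := by ring
  rw [potential, potential, hblocks]
  linarith

lemma potential_anti (hc : 0 ≤ c) {t t' : ℕ} (h : t ≤ t') :
    potential A ℓ L m d c t' ≤ potential A ℓ L m d c t := by
  unfold potential
  gcongr
  exact crowdedCells_anti h

lemma potential_le_sub_of_crowded (hc : 0 ≤ c) (hd : 0 < d) (hL : L = m * d) {t t' : ℕ}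
    (h : t + d ≤ t') (ht' : t' ≤ n * L) (hcr : Crowded A ℓ (t / L)) :
    potential A ℓ L m d c t' ≤ potential A ℓ L m d c t - c := by
  have hlt : crowdedCells A ℓ m d t' < crowdedCells A ℓ m d t :=
    crowdedCells_lt hd h (by rwa [mul_assoc, ← hL])
      (by rwa [Nat.div_div_eq_div_mul, mul_comm d, ← hL])
  have hcells : (crowdedCells A ℓ m d t' + 1 : ℝ) ≤ crowdedCells A ℓ m d t := by exact_mod_cast hlt
  have htt' : t ≤ t' := (Nat.le_add_right t d).trans h
  calc potential A ℓ L m d c t'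
      ≤ (n - (t / L : ℕ)) / 2 ^ A + c * (crowdedCells A ℓ m d t - 1) := by
        unfold potential
        gcongr
        linarith
    _ = potential A ℓ L m d c t - c := by
        rw [potential]
        ring

lemma sum_filter_le_card_mul {S : Type*} [Fintype S] {P : S → Prop} [DecidablePred P]
    {F : S → ℝ} {B : ℝ} (hB : 0 ≤ B) (hF : ∀ s, P s → F s ≤ B) :
    ∑ s with P s, F s ≤ Fintype.card S * B := by
  refine (sum_le_card_nsmul _ _ B fun s hs => hF s ((mem_filter_univ s).1 hs)).trans ?_
  rw [nsmul_eq_mul]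
  gcongr
  exact card_le_univ _

variable {S α : Type*} [Fintype S] [DecidableEq α] {f : ℕ → α} {t : ℕ} {v : S → List α}

lemma sum_exp_potential_greedyEnd_le (hc : 0 ≤ c) :
    ∑ s with v s <+ wordFactor f t (n * L), exp (potential A ℓ L m d c (greedyEnd f t (v s)))
      ≤ Fintype.card S * exp (potential A ℓ L m d c t) :=
  sum_filter_le_card_mul (exp_pos _).le fun _ _ => exp_le_exp.2 (potential_anti hc le_greedyEnd)

lemma sum_exp_potential_greedyEnd_le_of_crowded (hc : 0 ≤ c) (hd : 0 < d) (hL : L = m * d)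
    (ht : t ≤ n * L) (hv : ∀ s, d ≤ (v s).length) (hcr : Crowded A ℓ (t / L)) :
    ∑ s with v s <+ wordFactor f t (n * L), exp (potential A ℓ L m d c (greedyEnd f t (v s)))
      ≤ Fintype.card S * (exp (-c) * exp (potential A ℓ L m d c t)) := by
  refine sum_filter_le_card_mul (by positivity) fun s hs => ?_
  have hend : t + d ≤ greedyEnd f t (v s) := by
    have hlen := (sublist_wordFactor_greedyEnd ht hs).length_le
    rw [length_wordFactor] at hlen
    have hlong := hv s
    omega
  rw [← exp_add, neg_add_eq_sub]
  exact exp_le_exp.2 (potential_le_sub_of_crowded hc hd hL hend (greedyEnd_le ht hs) hcr)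

/-- The blocks of length `L` of which the pattern `τ` leaves at least `d` symbols. -/
def longBlocks (τ : Finset (Fin (n * L))) (d : ℕ) : Finset (Fin n) :=
  {j | d + #(blockPattern τ j) ≤ L}

lemma le_mul_card_longBlocks (hL : 0 < L) (hmd : L = m * d) {τ : Finset (Fin (n * L))}
    (hτ : m * #τ + 2 * (n * L) ≤ m * (n * L)) : n ≤ m * #(longBlocks τ d) := by
  have hblock (j : Fin n) :
      L ≤ (if j ∈ longBlocks τ d then L else 0) + d + #(blockPattern τ j) := by
    split_ifs with hj
    · omega
    · rw [longBlocks, mem_filter_univ] at hj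
      omega
  have hsum : n * L ≤ #(longBlocks τ d) * L + n * d + #τ := by
    calc n * L = ∑ _j : Fin n, L := by simp
      _ ≤ ∑ j, ((if j ∈ longBlocks τ d then L else 0) + d + #(blockPattern τ j)) :=
          sum_le_sum fun j _ => hblock j
      _ = #(longBlocks τ d) * L + n * d + #τ := by
          rw [sum_add_distrib, sum_add_distrib, sum_card_blockPattern, sum_ite_mem, univ_inter]
          simp
  have hmul := Nat.mul_le_mul_left m hsum
  have hcells : n * L = m * (n * d) := by rw [hmd]; ring
  refine Nat.le_of_mul_le_mul_right ?_ hL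
  linarith [mul_assoc m #(longBlocks τ d) L, mul_add m (#(longBlocks τ d) * L + n * d) #τ,
    mul_add m (#(longBlocks τ d) * L) (n * d)]

end

variable {R Λ n A m d q : ℕ} {y : Fin n → BlockSym R Λ}

lemma sum_exp_potential_greedyEnd_le_of_not_crowded (hR : 0 < R) (hA : A ≤ Λ)
    (hq : 2 * (R ^ Λ + 1) ^ 2 ^ A ≤ 2 ^ q) {σ : Finset (Fin (R ^ Λ))}
    (hσ : q * R ^ (Λ - 1) + #σ ≤ R ^ Λ) {t : ℕ} (ht : t ≤ n * R ^ Λ)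
    (hcr : ¬ Crowded A (fun k => (y k).level) (t / R ^ Λ)) {c : ℝ} (hc : c = A / (8 * 2 ^ Λ)) :
    ∑ s : BlockSym R Λ with applyDel σ s.toWord <+ wordFactor (wordStream (codeword y)) t
        (n * R ^ Λ), exp (potential A (fun k => (y k).level) (R ^ Λ) m d c
          (greedyEnd (wordStream (codeword y)) t (applyDel σ s.toWord)))
      ≤ Fintype.card (BlockSym R Λ) *
        (exp (-c) * exp (potential A (fun k => (y k).level) (R ^ Λ) m d c t)) := by
  set f := wordStream (codeword y)
  set Φ := potential A (fun k => (y k).level) (R ^ Λ) m d c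
  have hc₀ : 0 ≤ c := hc ▸ by positivity
  calc ∑ s : BlockSym R Λ with applyDel σ s.toWord <+ wordFactor f t (n * R ^ Λ),
        exp (Φ (greedyEnd f t (applyDel σ s.toWord)))
      ≤ ∑ s : BlockSym R Λ with applyDel σ s.toWord <+ wordFactor f t (n * R ^ Λ),
        exp (Φ t) * exp (-((greedyEnd f t (applyDel σ s.toWord) / R ^ Λ : ℕ) - (t / R ^ Λ : ℕ) : ℝ)
          / 2 ^ A) := by
        refine sum_le_sum fun s _ => ?_
        rw [← exp_add]
        exact exp_le_exp.2 (potential_le_add_of_le hc₀ le_greedyEnd)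
    _ = exp (Φ t) * ∑ s : BlockSym R Λ,
          stepWeight A (R ^ Λ) f (n * R ^ Λ) t (applyDel σ s.toWord) := by
        rw [← mul_sum, sum_filter]
        rfl
    _ ≤ exp (Φ t) * (Fintype.card (BlockSym R Λ) * exp (-c)) := by
        rw [hc]
        gcongr
        exact sum_stepWeight_le_of_not_crowded hR hA hq hσ ht hcr
    _ = Fintype.card (BlockSym R Λ) * (exp (-c) * exp (Φ t)) := by ring

lemma card_confusable_le_exp_potential (hR : 0 < R) (hA : A ≤ Λ)
    (hq : 2 * (R ^ Λ + 1) ^ 2 ^ A ≤ 2 ^ q) (hd₀ : 0 < d) (hd : d = q * R ^ (Λ - 1))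
    (hL : R ^ Λ = m * d) {c : ℝ} (hc : c = A / (8 * 2 ^ Λ)) (τ : Finset (Fin (n * R ^ Λ))) :
    (#{x : Fin n → BlockSym R Λ | Confusable τ (codeword x) (codeword y)} : ℝ)
      ≤ Fintype.card (BlockSym R Λ) ^ n * exp (-c) ^ #(longBlocks τ d) *
        exp (potential A (fun k => (y k).level) (R ^ Λ) m d c 0) := by
  set f := wordStream (codeword y) with hf
  set ℓ := fun k => (y k).level
  set v : Fin n → BlockSym R Λ → List Bool := fun j s => applyDel (blockPattern τ j) s.toWord
  have hc₀ : 0 ≤ c := hc ▸ by positivity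
  have hconf (x : Fin n → BlockSym R Λ) : Confusable τ (codeword x) (codeword y) ↔
      (List.ofFn fun j => v j (x j)).flatten <+ wordFactor f 0 (n * R ^ Λ) := by
    rw [Confusable, hf, wordFactor_wordStream, ← applyDel_concat τ fun j => (x j).toWord]
    rfl
  have hstep : ∀ j, ∀ t ≤ n * R ^ Λ,
      ∑ s with v j s <+ wordFactor f t (n * R ^ Λ),
          exp (potential A ℓ (R ^ Λ) m d c (greedyEnd f t (v j s)))
        ≤ Fintype.card (BlockSym R Λ) * ((if j ∈ longBlocks τ d then exp (-c) else 1) *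
          exp (potential A ℓ (R ^ Λ) m d c t)) := by
    intro j t ht
    split_ifs with hj
    · have hσ : d + #(blockPattern τ j) ≤ R ^ Λ := (mem_filter_univ j).1 hj
      by_cases hcr : Crowded A ℓ (t / R ^ Λ)
      · refine sum_exp_potential_greedyEnd_le_of_crowded hc₀ hd₀ hL ht (fun s => ?_) hcr
        have hlen := length_applyDel_add_card (blockPattern τ j) s.toWord
        change d ≤ (applyDel (blockPattern τ j) s.toWord).length
        omega
      · exact sum_exp_potential_greedyEnd_le_of_not_crowded hR hA hq (hd ▸ hσ) ht hcr hc
    · rw [one_mul]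
      exact sum_exp_potential_greedyEnd_le hc₀
  have hcount := card_flatten_sublist_wordFactor_le (t := 0)
    (fun t ht => one_le_exp (potential_nonneg hc₀ ht)) (fun j => by split_ifs <;> positivity) hstep
    (Nat.zero_le _)
  rw [prod_ite_mem, univ_inter, prod_const] at hcount
  rwa [filter_congr fun x _ => hconf x]

-- The hypothesis on `τ` says that at most a fraction `1 - 2 / m` of the symbols is deleted.
lemma card_confusable_le (hm : 0 < m) (hq₀ : 0 < q) (hR : R = m * q) (hΛ : 0 < Λ) (hA : A ≤ Λ)
    (hAΛ : 32 * m * 2 ^ Λ ≤ A * 2 ^ A) (hq : 2 * (R ^ Λ + 1) ^ 2 ^ A ≤ 2 ^ q)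
    (hy : 2 * m ^ 2 * #(crowdedBlocks A fun k => (y k).level) ≤ n)
    {τ : Finset (Fin (n * R ^ Λ))}
    (hτ : m * #τ + 2 * (n * R ^ Λ) ≤ m * (n * R ^ Λ)) :
    (#{x : Fin n → BlockSym R Λ | Confusable τ (codeword x) (codeword y)} : ℝ)
      ≤ Fintype.card (BlockSym R Λ) ^ n * exp (-(n / 2 ^ A)) := by
  have hR₀ : 0 < R := hR ▸ Nat.mul_pos hm hq₀
  set d := q * R ^ (Λ - 1) with hd
  set c : ℝ := A / (8 * 2 ^ Λ) with hc
  have hL : R ^ Λ = m * d := by rw [hd, ← mul_assoc, ← hR, mul_pow_sub_one hΛ.ne']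
  refine (card_confusable_le_exp_potential hR₀ hA hq (Nat.mul_pos hq₀ (pow_pos hR₀ _)) hd hL hc
    τ).trans ?_
  rw [mul_assoc, ← exp_nat_mul, ← exp_add]
  gcongr
  set ℓ := fun k => (y k).level
  have hm' : (0 : ℝ) < m := by exact_mod_cast hm
  have hlong : (n : ℝ) ≤ m * #(longBlocks τ d) := by
    exact_mod_cast le_mul_card_longBlocks (pow_pos hR₀ _) hL hτ
  have hcells : (crowdedCells A ℓ m d 0 : ℝ) ≤ m * #(crowdedBlocks A ℓ) := by
    exact_mod_cast crowdedCells_le hm 0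
  have hy' : 2 * (m : ℝ) ^ 2 * #(crowdedBlocks A ℓ) ≤ n := by exact_mod_cast hy
  have hAΛ' : 32 * (m : ℝ) * 2 ^ Λ ≤ A * 2 ^ A := by exact_mod_cast hAΛ
  have hgain : (n : ℝ) / (2 * m) ≤ #(longBlocks τ d) - crowdedCells A ℓ m d 0 := by
    rw [div_le_iff₀ (mul_pos two_pos hm')]
    nlinarith
  have hrate : 2 * (n / 2 ^ A) ≤ c * (n / (2 * m)) := by
    rw [hc, div_mul_div_comm, mul_div_assoc', div_le_div_iff₀ (by positivity) (by positivity)]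
    nlinarith [mul_le_mul_of_nonneg_left hAΛ' (Nat.cast_nonneg (α := ℝ) n)]
  have hgain' := mul_le_mul_of_nonneg_left hgain (show 0 ≤ c by positivity)
  rw [potential, Nat.zero_div, Nat.cast_zero, sub_zero]
  linarith

end ConfusionProbability

/-! ### Typical words -/

section TypicalWords

open Finset

section Markov

variable {S : Type*} [Fintype S] {g : S → ℕ} {μ : ℕ}

lemma sum_sum_apply (g : S → ℕ) (n : ℕ) :
    ∑ y : Fin n → S, ∑ k, g (y k) = n * (Fintype.card S ^ (n - 1) * ∑ s, g s) := by
  have hcoord (k : Fin n) :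
      ∑ y : Fin n → S, g (y k) = Fintype.card S ^ (n - 1) * ∑ s, g s := by
    simpa using Fintype.sum_piFinset_apply g univ k
  rw [sum_comm]
  simp [hcoord]

-- By Markov's inequality: the mean of the sum is at most `n * μ / 2`.
lemma card_pow_le_two_mul_card_sum_le (hg : 2 * ∑ s, g s ≤ μ * Fintype.card S) (n : ℕ) :
    Fintype.card S ^ n ≤ 2 * #{y : Fin n → S | ∑ k, g (y k) ≤ n * μ} := by
  set K := Fintype.card S with hK
  have hmarkov : #{y : Fin n → S | ¬ ∑ k, g (y k) ≤ n * μ} * (n * μ + 1)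
      ≤ n * (K ^ (n - 1) * ∑ s, g s) := by
    rw [hK, ← sum_sum_apply, ← smul_eq_mul]
    exact (card_nsmul_le_sum _ _ _ fun y hy => not_le.1 ((mem_filter_univ y).1 hy)).trans
      (sum_le_sum_of_subset (subset_univ _))
  have hmean : 2 * (n * (K ^ (n - 1) * ∑ s, g s)) ≤ n * μ * K ^ n := by
    calc 2 * (n * (K ^ (n - 1) * ∑ s, g s)) = n * (K ^ (n - 1) * (2 * ∑ s, g s)) := by ring
      _ ≤ n * (K ^ (n - 1) * (μ * K)) := by gcongr
      _ = n * μ * K ^ n := by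
        rcases n with _ | n
        · simp
        · rw [Nat.add_sub_cancel]
          ring
  have hbad : 2 * #{y : Fin n → S | ¬ ∑ k, g (y k) ≤ n * μ} ≤ K ^ n :=
    Nat.le_of_mul_le_mul_right (by linarith [Nat.zero_le (K ^ n)]) (Nat.succ_pos (n * μ))
  have hsplit := card_filter_add_card_filter_not (s := (univ : Finset (Fin n → S)))
    fun y => ∑ k, g (y k) ≤ n * μ
  rw [card_univ, Fintype.card_fun, Fintype.card_fin, ← hK] at hsplit
  omega

end Markov

lemma sum_two_pow_mul_levelCost_le (A Λ : ℕ) :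
    ∑ a ∈ range Λ, 2 ^ a * levelCost A a ≤ A * 2 ^ (A + 1) := by
  have hgeom (b : ℕ) : ∑ a ∈ range (b + 1), 2 ^ a ≤ 2 ^ (b + 1) :=
    (Nat.geomSum_lt le_rfl fun _ => mem_range.1).le
  calc ∑ a ∈ range Λ, 2 ^ a * levelCost A a
      = ∑ b ∈ range A, ∑ a ∈ range Λ with a ≤ b, 2 ^ a * 2 ^ (A - b) := by
        simp only [levelCost, mul_sum]
        refine sum_comm' fun a b => ?_
        simp only [mem_range, mem_Ico, mem_filter]
        tauto
    _ ≤ ∑ b ∈ range A, ∑ a ∈ range (b + 1), 2 ^ a * 2 ^ (A - b) := by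
        refine sum_le_sum fun b _ => sum_le_sum_of_subset fun a ha => ?_
        exact mem_range.2 (Nat.lt_succ_of_le (mem_filter.1 ha).2)
    _ ≤ ∑ b ∈ range A, 2 ^ (A + 1) := by
        refine sum_le_sum fun b hb => ?_
        rw [← sum_mul]
        refine (Nat.mul_le_mul_right _ (hgeom b)).trans_eq ?_
        rw [← pow_add]
        congr 1
        have := mem_range.1 hb
        omega
    _ = A * 2 ^ (A + 1) := by simp

variable {R Λ A : ℕ}

lemma sum_levelCost_level_le (A : ℕ) :
    ∑ s : BlockSym R Λ, levelCost A s.level ≤ 2 ^ R ^ Λ * (A * 2 ^ (A + 1)) := by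
  calc ∑ s : BlockSym R Λ, levelCost A s.level
      = 2 ^ R ^ Λ * ∑ c : LevelSym Λ, levelCost A c.1 := by
        rw [Fintype.sum_prod_type, mul_sum]
        simp [BlockSym.level]
    _ ≤ 2 ^ R ^ Λ * (A * 2 ^ (A + 1)) := by
        rw [sum_levelSym fun a => levelCost A a]
        exact Nat.mul_le_mul_left _ (sum_two_pow_mul_levelCost_le A Λ)

lemma two_pow_mul_two_pow_le_two_mul_card_blockSym (hΛ : 0 < Λ) :
    2 ^ R ^ Λ * 2 ^ Λ ≤ 2 * Fintype.card (BlockSym R Λ) := by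
  have hlevel : 2 ^ Λ ≤ 2 * Fintype.card (LevelSym Λ) := by
    have hcard := card_levelSym_add_one Λ
    have hle := Nat.le_self_pow hΛ.ne' 2
    omega
  rw [Fintype.card_prod, Fintype.card_fun, Fintype.card_bool, Fintype.card_fin]
  nlinarith [Nat.mul_le_mul_left (2 ^ R ^ Λ) hlevel]

lemma card_pow_le_two_mul_card_crowdedBlocks_le {e r : ℕ} (hA : 0 < A) (hΛ : Λ = A + e)
    (he : 16 * r ≤ 2 ^ e) (n : ℕ) :
    Fintype.card (BlockSym R Λ) ^ n ≤ 2 * #{y : Fin n → BlockSym R Λ |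
      r * #(crowdedBlocks A fun k => (y k).level) ≤ n} := by
  have hcost : 2 * ∑ s : BlockSym R Λ, 2 * r * levelCost A s.level
      ≤ A * Fintype.card (BlockSym R Λ) := by
    have hcard := two_pow_mul_two_pow_le_two_mul_card_blockSym (R := R) (Λ := Λ) (by omega)
    refine Nat.le_of_mul_le_mul_left ?_ Nat.two_pos
    calc 2 * (2 * ∑ s : BlockSym R Λ, 2 * r * levelCost A s.level)
        = 8 * r * ∑ s : BlockSym R Λ, levelCost A s.level := by
          rw [← mul_sum]
          ring
      _ ≤ 8 * r * (2 ^ R ^ Λ * (A * 2 ^ (A + 1))) :=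
          Nat.mul_le_mul_left _ (sum_levelCost_level_le A)
      _ = A * 2 ^ A * 2 ^ R ^ Λ * (16 * r) := by ring
      _ ≤ A * 2 ^ A * 2 ^ R ^ Λ * 2 ^ e := Nat.mul_le_mul_left _ he
      _ = A * (2 ^ R ^ Λ * 2 ^ Λ) := by
          rw [hΛ, pow_add 2 A e]
          ring
      _ ≤ A * (2 * Fintype.card (BlockSym R Λ)) := Nat.mul_le_mul_left A hcard
      _ = 2 * (A * Fintype.card (BlockSym R Λ)) := by ring
  refine (card_pow_le_two_mul_card_sum_le hcost n).trans
    (Nat.mul_le_mul_left 2 (card_le_card (monotone_filter_right _ fun y _ hy => ?_)))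
  rw [← mul_sum] at hy
  refine Nat.le_of_mul_le_mul_left ?_ hA
  calc A * (r * #(crowdedBlocks A fun k => (y k).level))
      = r * (A * #(crowdedBlocks A fun k => (y k).level)) := by ring
    _ ≤ r * (2 * ∑ k, levelCost A (y k).level) :=
        Nat.mul_le_mul_left r (mul_card_crowdedBlocks_le A _)
    _ = 2 * r * ∑ k, levelCost A (y k).level := by ring
    _ ≤ A * n := hy.trans_eq (mul_comm n A)

end TypicalWords

/-! ### Codes -/

section Codes

open Finset Real

section Expurgation

variable {S α : Type*} [Fintype S] [Nonempty S] {N : ℕ} {w : S → Fin N → α} {r : ℕ}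

-- Word `i` of the tuple is distinct from all the others unless it is bad for some pattern, because
-- equal words are confusable.
lemma exists_code_card_confusable_le {B M k : ℕ} (hr : r ≤ N)
    (hB : ∀ τ : Finset (Fin N), #τ = r → ∀ y, #{x | Confusable τ (w x) (w y)} ≤ B)
    (hlt : 2 ^ N * (2 * (2 ^ M * (M * B) ^ k)) < Fintype.card S ^ k) :
    ∃ C : Finset (Fin N → α), M ≤ #C + 2 * k ∧ ∀ τ : Finset (Fin N), #τ = r →
      #{x ∈ C | ∃ y ∈ C, y ≠ x ∧ Confusable τ x y} ≤ 2 * k := by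
  have hpatterns : Fintype.card {τ : Finset (Fin N) // #τ = r} ≤ 2 ^ N :=
    (Fintype.card_subtype_le _).trans_eq (by simp)
  obtain ⟨X, hX⟩ := exists_tuple_card_related_le (ι := Fin M)
    (r := fun (τ : {τ : Finset (Fin N) // #τ = r}) x y => Confusable τ.1 (w x) (w y))
    (fun τ y => hB τ τ.2 y) (k := k) (by
      rw [Fintype.card_fin]
      exact (Nat.mul_le_mul_right _ hpatterns).trans_lt hlt)
  let bad (τ : Finset (Fin N)) : Finset (Fin M) :=
    {i | ∃ j, j ≠ i ∧ Confusable τ (w (X i)) (w (X j))}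
  have hbad (τ : Finset (Fin N)) (hτ : #τ = r) : #(bad τ) ≤ 2 * k := by convert hX ⟨τ, hτ⟩
  refine ⟨univ.image fun i => w (X i), ?_, fun τ hτ => ?_⟩
  · obtain ⟨τ, -, hτ⟩ := exists_subset_card_eq (s := (univ : Finset (Fin N))) (n := r) (by simpa)
    have hinj : Set.InjOn (fun i => w (X i)) ((bad τ)ᶜ : Finset (Fin M)) := by
      intro i hi j _ hij
      by_contra hne
      refine mem_compl.1 (mem_coe.1 hi) ((mem_filter_univ i).2 ⟨j, Ne.symm hne, ?_⟩)
      exact (show w (X i) = w (X j) from hij) ▸ Confusable.refl τ _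
    have hgood := card_le_card_of_injOn (t := univ.image fun i => w (X i)) _
      (fun i _ => mem_image_of_mem _ (mem_univ i)) hinj
    rw [card_compl, Fintype.card_fin] at hgood
    have := hbad τ hτ
    omega
  · refine (card_le_card (t := (bad τ).image fun i => w (X i)) fun x hx => ?_).trans
      (card_image_le.trans (hbad τ hτ))
    obtain ⟨hx, y, hy, hne, hconf⟩ := mem_filter.1 hx
    obtain ⟨i, -, rfl⟩ := mem_image.1 hx
    obtain ⟨j, -, rfl⟩ := mem_image.1 hy
    exact mem_image_of_mem _ ((mem_filter_univ i).2 ⟨j, fun h => hne (by rw [h]), hconf⟩)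

lemma union_bound_lt {s B D k : ℕ} {E : ℝ} (hk : (k : ℝ) ≤ E) (hk₀ : k ≠ 0)
    (hB : B * E ^ 2 ≤ 2 * s) (hs : 0 < s) (hN : 1 + N ≤ k) (hE : 2 ^ (1 + 4 * D) * (8 * D) < E) :
    2 ^ N * (2 * (2 ^ (4 * D * k) * (4 * D * k * B) ^ k)) < s ^ k := by
  have hE₀ : 0 < E := lt_of_le_of_lt (by positivity) hE
  have hbase : 2 ^ (1 + 4 * D) * (4 * D * k * B) < s := by
    have hreal : (2 : ℝ) ^ (1 + 4 * D) * (4 * D * k * B) < s := by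
      refine lt_of_mul_lt_mul_right ?_ hE₀.le
      calc (2 : ℝ) ^ (1 + 4 * D) * (4 * D * k * B) * E
          ≤ 2 ^ (1 + 4 * D) * (4 * D * E * B) * E := by gcongr
        _ = 2 ^ (1 + 4 * D) * (4 * D) * (B * E ^ 2) := by ring
        _ ≤ 2 ^ (1 + 4 * D) * (4 * D) * (2 * s) := by gcongr
        _ = s * (2 ^ (1 + 4 * D) * (8 * D)) := by ring
        _ < s * E := by gcongr
    exact_mod_cast hreal
  calc 2 ^ N * (2 * (2 ^ (4 * D * k) * (4 * D * k * B) ^ k))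
      = 2 ^ (1 + N) * 2 ^ (4 * D * k) * (4 * D * k * B) ^ k := by ring
    _ ≤ 2 ^ k * 2 ^ (4 * D * k) * (4 * D * k * B) ^ k := by
        gcongr
        exact one_le_two
    _ = (2 ^ (1 + 4 * D) * (4 * D * k * B)) ^ k := by
        rw [mul_pow (2 ^ (1 + 4 * D)), ← pow_mul, add_mul, one_mul, pow_add]
    _ < s ^ k := Nat.pow_lt_pow_left hbase hk₀

lemma exists_code_card_confusable_le_mul_card {D : ℕ} {E ε : ℝ} (hr : r ≤ N) (hD : 1 ≤ ε * D)
    (hε : 0 < ε) (hN : N + 2 ≤ E) (hE : 2 ^ (1 + 4 * D) * (8 * D) < E)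
    (hconf : ∀ τ : Finset (Fin N), #τ = r → ∀ y,
      #{x | Confusable τ (w x) (w y)} * E ^ 2 ≤ 2 * Fintype.card S) :
    ∃ C : Finset (Fin N → α), E ≤ #C ∧ ∀ τ : Finset (Fin N), #τ = r →
      (#{x ∈ C | ∃ y ∈ C, y ≠ x ∧ Confusable τ x y} : ℝ) ≤ ε * #C := by
  have hE₀ : 0 < E := lt_of_le_of_lt (by positivity) hE
  set k := ⌊E⌋₊
  set B := ⌊2 * (Fintype.card S : ℝ) / E ^ 2⌋₊
  have hkE : (k : ℝ) ≤ E := Nat.floor_le hE₀.le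
  have hk : 2 + N ≤ k := Nat.le_floor (by push_cast; linarith)
  have hD₀ : 0 < D := by
    refine Nat.pos_of_ne_zero fun h => ?_
    rw [h, Nat.cast_zero, mul_zero] at hD
    linarith
  have hBE : B * E ^ 2 ≤ 2 * (Fintype.card S : ℝ) :=
    (le_div_iff₀ (by positivity)).1 (Nat.floor_le (by positivity))
  obtain ⟨C, hC, hbad⟩ := exists_code_card_confusable_le (w := w) (B := B) (M := 4 * D * k) hr
    (fun τ hτ y => Nat.le_floor ((le_div_iff₀ (by positivity)).2 (hconf τ hτ y)))
    (union_bound_lt hkE (by omega) hBE Fintype.card_pos (by omega) hE)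
  have hcard : 2 * D * k ≤ #C := by nlinarith
  have hcard' : 2 * (D : ℝ) * k ≤ #C := by exact_mod_cast hcard
  refine ⟨C, ?_, fun τ hτ => ?_⟩
  · have hk₁ : k + 1 ≤ #C := by nlinarith
    calc E ≤ k + 1 := (Nat.lt_floor_add_one E).le
      _ ≤ #C := by exact_mod_cast hk₁
  · calc (#{x ∈ C | ∃ y ∈ C, y ≠ x ∧ Confusable τ x y} : ℝ) ≤ 2 * k := by
          exact_mod_cast hbad τ hτ
      _ ≤ ε * D * (2 * k) := le_mul_of_one_le_left (by positivity) hD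
      _ = ε * (2 * D * k) := by ring
      _ ≤ ε * #C := by gcongr

end Expurgation

section Parameters

open Filter

lemma exists_two_mul_pow_le_two_pow (m Λ w : ℕ) :
    ∃ q : ℕ, 0 < q ∧ 2 * ((m * q) ^ Λ + 1) ^ w ≤ 2 ^ q := by
  set c : ℝ := 2 * ((m : ℝ) ^ Λ + 1) ^ w with hc
  have hc₀ : 0 < c := by positivity
  have hlim := tendsto_pow_const_div_const_pow_of_one_lt (Λ * w) (r := (2 : ℝ)) one_lt_two
  obtain ⟨q, hq, hq₀⟩ :=
    ((hlim.eventually (gt_mem_nhds (inv_pos.2 hc₀))).and (eventually_ge_atTop 1)).exists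
  have hq₁ : (1 : ℝ) ≤ q := by exact_mod_cast hq₀
  rw [div_lt_iff₀ (by positivity), inv_mul_eq_div, lt_div_iff₀ hc₀] at hq
  have hreal : 2 * (((m : ℝ) * q) ^ Λ + 1) ^ w ≤ 2 ^ q := by
    calc 2 * (((m : ℝ) * q) ^ Λ + 1) ^ w
        ≤ 2 * (((m : ℝ) ^ Λ + 1) * (q : ℝ) ^ Λ) ^ w := by
          gcongr
          rw [mul_pow, add_mul, one_mul]
          gcongr
          exact one_le_pow₀ hq₁
      _ = (q : ℝ) ^ (Λ * w) * c := by rw [hc, mul_pow, ← pow_mul]; ring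
      _ ≤ 2 ^ q := hq.le
  exact ⟨q, hq₀, by exact_mod_cast hreal⟩

lemma exists_linear_add_two_le_exp {c : ℝ} (hc : 0 < c) (L n₀ : ℕ) (Q : ℝ) :
    ∃ n ≥ n₀, ((n * L : ℕ) + 2 : ℝ) ≤ exp (c * n) ∧ Q < exp (c * n) := by
  have hcn : Tendsto (fun n : ℕ => c * (n : ℝ)) atTop atTop :=
    tendsto_natCast_atTop_atTop.const_mul_atTop hc
  have hratio := ((tendsto_exp_div_pow_atTop 1).comp hcn).eventually_ge_atTop ((L + 2) / c)
  have hlarge := (tendsto_exp_atTop.comp hcn).eventually_gt_atTop Q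
  obtain ⟨n, hn, hnQ, hn₀, hn₁⟩ := (hratio.and (hlarge.and
    ((eventually_ge_atTop n₀).and (eventually_ge_atTop 1)))).exists
  have hn₁' : (1 : ℝ) ≤ n := by exact_mod_cast hn₁
  refine ⟨n, hn₀, ?_, hnQ⟩
  rw [Function.comp_apply, pow_one, le_div_iff₀ (by positivity)] at hn
  calc ((n * L : ℕ) + 2 : ℝ) ≤ (L + 2) * n := by
        push_cast
        nlinarith
    _ = (L + 2) / c * (c * n) := by field_simp
    _ ≤ exp (c * n) := hn

lemma exists_mul_add_two_mul_le {p : ℝ} (hp : p < 1) :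
    ∃ m > 0, ∀ a N : ℕ, (a : ℝ) ≤ p * N → m * a + 2 * N ≤ m * N := by
  have hp' : 0 < 1 - p := sub_pos.2 hp
  refine ⟨⌈2 / (1 - p)⌉₊, Nat.ceil_pos.2 (by positivity), fun a N ha => ?_⟩
  have hm : 2 ≤ ⌈2 / (1 - p)⌉₊ * (1 - p) := (div_le_iff₀ hp').1 (Nat.le_ceil _)
  have hreal : (⌈2 / (1 - p)⌉₊ * a + 2 * N : ℝ) ≤ ⌈2 / (1 - p)⌉₊ * N := by
    nlinarith [mul_le_mul_of_nonneg_right hm (Nat.cast_nonneg (α := ℝ) N),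
      mul_le_mul_of_nonneg_left ha (Nat.cast_nonneg (α := ℝ) ⌈2 / (1 - p)⌉₊)]
  exact_mod_cast hreal

end Parameters

/-- The words of `n` blocks in which at most `n / (2 * m ^ 2)` blocks are crowded. -/
abbrev TypicalWord (R Λ n A m : ℕ) : Type :=
  {y : Fin n → BlockSym R Λ // 2 * m ^ 2 * #(crowdedBlocks A fun k => (y k).level) ≤ n}

lemma card_typicalWord_confusable_mul_exp_le {m q e A Λ R n : ℕ} (hm : 0 < m) (hq₀ : 0 < q)
    (hR : R = m * q) (hA : 0 < A) (hΛ : Λ = A + e) (he : 32 * m ^ 2 ≤ 2 ^ e)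
    (hAe : 32 * m * 2 ^ e ≤ A) (hq : 2 * (R ^ Λ + 1) ^ 2 ^ A ≤ 2 ^ q)
    {τ : Finset (Fin (n * R ^ Λ))} (hτ : m * #τ + 2 * (n * R ^ Λ) ≤ m * (n * R ^ Λ))
    (y : TypicalWord R Λ n A m) :
    #{x : TypicalWord R Λ n A m | Confusable τ (codeword x.1) (codeword y.1)} * exp (n / 2 ^ A)
      ≤ 2 * Fintype.card (TypicalWord R Λ n A m) := by
  have htypical : (Fintype.card (BlockSym R Λ) : ℝ) ^ n
      ≤ 2 * Fintype.card (TypicalWord R Λ n A m) := by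
    rw [Fintype.card_subtype]
    exact_mod_cast card_pow_le_two_mul_card_crowdedBlocks_le hA hΛ (by linarith) n
  have hsub : #{x : TypicalWord R Λ n A m | Confusable τ (codeword x.1) (codeword y.1)}
      ≤ #{x : Fin n → BlockSym R Λ | Confusable τ (codeword x) (codeword y.1)} :=
    card_le_card_of_injOn Subtype.val (fun x hx => by simpa using hx) Subtype.val_injective.injOn
  have hAΛ : 32 * m * 2 ^ Λ ≤ A * 2 ^ A := by
    rw [hΛ, pow_add]
    nlinarith [Nat.mul_le_mul_right (2 ^ A) hAe]
  calc #{x : TypicalWord R Λ n A m | Confusable τ (codeword x.1) (codeword y.1)} * exp (n / 2 ^ A)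
      ≤ Fintype.card (BlockSym R Λ) ^ n * exp (-(n / 2 ^ A)) * exp (n / 2 ^ A) := by
        gcongr
        exact (Nat.cast_le.2 hsub).trans
          (card_confusable_le hm hq₀ hR (by omega) (by omega) hAΛ hq y.2 hτ)
    _ = Fintype.card (BlockSym R Λ) ^ n := by
        rw [mul_assoc, ← exp_add, neg_add_cancel, exp_zero, mul_one]
    _ ≤ 2 * Fintype.card (TypicalWord R Λ n A m) := htypical

lemma exists_ensemble_card_confusable_mul_exp_le {m : ℕ} (hm : 0 < m) :
    ∃ L > 0, ∃ c : ℝ, 0 < c ∧ ∀ n, ∃ (S : Type) (_ : Fintype S) (_ : Nonempty S)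
      (w : S → Fin (n * L) → Bool), ∀ τ : Finset (Fin (n * L)),
        m * #τ + 2 * (n * L) ≤ m * (n * L) → ∀ y,
          #{x | Confusable τ (w x) (w y)} * exp (c * n) ^ 2 ≤ 2 * Fintype.card S := by
  set e := 32 * m ^ 2 with he
  set A := 32 * m * 2 ^ e
  set Λ := A + e with hΛ
  have hA₀ : 0 < A := by positivity
  have hΛ₀ : 0 < Λ := by positivity
  obtain ⟨q, hq₀, hq⟩ := exists_two_mul_pow_le_two_pow m Λ (2 ^ A)
  have : Nonempty (BlockSym (m * q) Λ) := ⟨⟨⟨0, hΛ₀⟩, ⟨0, by positivity⟩⟩, fun _ => false⟩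
  refine ⟨(m * q) ^ Λ, by positivity, 1 / (2 * 2 ^ A), by positivity, fun n =>
    ⟨TypicalWord (m * q) Λ n A m, inferInstance, ?_, fun y => codeword y.1, fun τ hτ y => ?_⟩⟩
  · have he₂ : 16 * (2 * m ^ 2) ≤ 2 ^ e := by
      calc 16 * (2 * m ^ 2) = e := by rw [he]; ring
        _ ≤ 2 ^ e := Nat.lt_two_pow_self.le
    have htypical := card_pow_le_two_mul_card_crowdedBlocks_le (R := m * q) hA₀ hΛ he₂ n
    have hpos : 0 < Fintype.card (BlockSym (m * q) Λ) ^ n := pow_pos Fintype.card_pos n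
    rw [← Fintype.card_pos_iff, Fintype.card_subtype]
    omega
  · have hexp : exp (1 / (2 * 2 ^ A) * n) ^ 2 = exp (n / 2 ^ A) := by
      rw [← exp_nat_mul]
      congr 1
      push_cast
      field_simp
    rw [hexp]
    exact card_typicalWord_confusable_mul_exp_le hm hq₀ rfl hA₀ hΛ Nat.lt_two_pow_self.le le_rfl
      hq hτ y

lemma two_rpow_div_mul_log_two_mul {c : ℝ} {L : ℕ} (hL : 0 < L) (n : ℕ) :
    (2 : ℝ) ^ (c / (L * log 2) * (n * L : ℕ)) = exp (c * n) := by
  have hlog : log 2 ≠ 0 := (log_pos one_lt_two).ne'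
  rw [rpow_def_of_pos two_pos]
  congr 1
  push_cast
  field_simp

end Codes

/-- For every `p ∈ (0,1)` there exists `R > 0` such that for every `ε > 0` there are
infinitely many block lengths `N` admitting a code `C ⊆ {0,1}^N` of size at least
`2^{RN}` that decodes `⌊pN⌋` oblivious deletions in the average case: for every
deletion pattern of `⌊pN⌋` deletions, at most `ε|C|` codewords are confusable with
another codeword. -/
theorem oblivious_average_case_codes :
    ∀ p : ℝ, 0 < p → p < 1 → ∃ R : ℝ, 0 < R ∧
      ∀ ε : ℝ, 0 < ε → ∀ n₀ : ℕ, ∃ N ≥ n₀, ∃ C : Finset (Fin N → Bool),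
        (C.card : ℝ) ≥ 2 ^ (R * N) ∧
        ∀ τ : Finset (Fin N), τ.card = ⌊p * (N : ℝ)⌋₊ →
          ((C.filter (fun x => ∃ y ∈ C, y ≠ x ∧
              (applyDel τ x).Sublist (List.ofFn y))).card : ℝ) ≤ ε * C.card := by
  intro p hp₀ hp₁
  obtain ⟨m, hm, hpm⟩ := exists_mul_add_two_mul_le hp₁
  obtain ⟨L, hL, c, hc, hens⟩ := exists_ensemble_card_confusable_mul_exp_le hm
  refine ⟨c / (L * Real.log 2), by positivity, fun ε hε n₀ => ?_⟩
  obtain ⟨D, hD⟩ := exists_nat_ge (1 / ε)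
  obtain ⟨n, hn₀, hnN, hnE⟩ := exists_linear_add_two_le_exp hc L n₀ (2 ^ (1 + 4 * D) * (8 * D))
  obtain ⟨S, _, _, w, hw⟩ := hens n
  have hfloor : (⌊p * (n * L : ℕ)⌋₊ : ℝ) ≤ p * (n * L : ℕ) := Nat.floor_le (by positivity)
  have hr : ⌊p * (n * L : ℕ)⌋₊ ≤ n * L :=
    Nat.floor_le_of_le (mul_le_of_le_one_left (by positivity) hp₁.le)
  obtain ⟨C, hC, hbad⟩ := exists_code_card_confusable_le_mul_card hr ((div_le_iff₀' hε).1 hD) hε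
    hnN hnE fun τ hτ => hw τ (hpm _ _ (hτ ▸ hfloor))
  refine ⟨n * L, hn₀.trans (Nat.le_mul_of_pos_right n hL), C, ?_, fun τ hτ => ?_⟩
  · exact (two_rpow_div_mul_log_two_mul hL n).trans_le hC
  · convert hbad τ hτ
    rfl
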